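/- arXiv:1806.00220 — 12 statements merged into one kernel-verified Lean document; each statement's English description precedes it below -/
import Mathlib

section
/- The subset Γ' is cofinal in Γ: for every γ ∈ Γ there exists γ' ∈ Γ' with γ ≤ γ'. Here Γ' consists of those (X, P) ∈ Γ such that for every component c of G − X the set of vertices covered by the P-class of c, namely ⋃ {↑d : d a component of G − X with P.Rel d c}, is an infinite subset of V. -/
open SimpleGraph

/-- An element of `Γ`: a finite vertex set `X` together with a finite partition
(setoid with finitely many classes) of the components of `G − X`. -/
structure Gamma {V : Type*} (G : SimpleGraph V) where
  X : Finset V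
  P : Setoid (G.ComponentCompl (X : Set V))
  finiteClasses : Finite (Quotient P)

/-- The order on `Γ`: `(X, P) ≤ (Y, Q)` iff `X ⊆ Y` and `Q` refines the pullback of `P`
along `ComponentCompl.hom`. -/
def Gamma.le {V : Type*} {G : SimpleGraph V} (γ δ : Gamma G) : Prop :=
  ∃ h : γ.X ⊆ δ.X, ∀ c c' : G.ComponentCompl (δ.X : Set V),
    δ.P.r c c' →
      γ.P.r (c.hom (Finset.coe_subset.mpr h)) (c'.hom (Finset.coe_subset.mpr h))

/-- Membership in `Γ'`: every partition class covers an infinite set of vertices. -/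
def Gamma.mem_Gamma' {V : Type*} {G : SimpleGraph V} (γ : Gamma G) : Prop :=
  ∀ c : G.ComponentCompl (γ.X : Set V),
    {v : V | ∃ d : G.ComponentCompl (γ.X : Set V), γ.P.r d c ∧ v ∈ (d : Set V)}.Infinite

/-!
Finitely many classes are too small, that is, cover only finitely many vertices, so together they
cover a finite set. Adjoining that set to `X` and pulling `P` back deletes these classes entirely,
while every other class loses only finitely many vertices and so still covers infinitely many.
-/

section ClassSupport

variable {V : Type*} {G : SimpleGraph V} {K L : Set V} (P : Setoid (G.ComponentCompl K))

/-- The support of the `P`-class of a component `c`: the set of vertices covered by the components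
in that class. As in `Gamma.mem_Gamma'`, classes are indexed by representatives rather than by
elements of `Quotient P`. -/
def classSupport (c : G.ComponentCompl K) : Set V :=
  {v | ∃ d : G.ComponentCompl K, P.r d c ∧ v ∈ (d : Set V)}

/-- The union of all finite class supports of `P`. -/
def finiteClassesSupport : Set V :=
  ⋃₀ {S ∈ Set.range (classSupport P) | S.Finite}

variable {P}

theorem subset_classSupport (c : G.ComponentCompl K) : (c : Set V) ⊆ classSupport P c :=
  fun _ hv => ⟨c, P.refl c, hv⟩

theorem classSupport_eq_of_rel {c c' : G.ComponentCompl K} (h : P.r c c') :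
    classSupport P c = classSupport P c' :=
  Set.ext fun _ => exists_congr fun _ =>
    and_congr_left' ⟨fun hd => P.trans hd h, fun hd => P.trans hd (P.symm h)⟩

theorem classSupport_comap_hom (h : K ⊆ L) (c : G.ComponentCompl L) :
    classSupport (P.comap (ComponentCompl.hom h)) c = classSupport P (c.hom h) \ L := by
  ext v
  constructor
  · rintro ⟨d, hdc, hvd⟩
    exact ⟨⟨d.hom h, hdc, d.subset_hom h hvd⟩, ComponentCompl.notMem_of_mem hvd⟩
  · rintro ⟨⟨_, hdc, _, rfl⟩, hvL⟩
    exact ⟨G.componentComplMk hvL, hdc, G.componentComplMk_mem hvL⟩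

variable (P) in
theorem finite_range_classSupport [Finite (Quotient P)] : (Set.range (classSupport P)).Finite := by
  rw [← Set.range_quotient_lift fun _ _ => classSupport_eq_of_rel]
  exact Set.finite_range _

variable (P) in
theorem finite_finiteClassesSupport [Finite (Quotient P)] : (finiteClassesSupport P).Finite :=
  ((finite_range_classSupport P).sep _).sUnion fun _ hS => hS.2

theorem infinite_classSupport_comap_hom (h : K ⊆ L) (hL : L.Finite)
    (hPL : finiteClassesSupport P ⊆ L) (c : G.ComponentCompl L) :
    (classSupport (P.comap (ComponentCompl.hom h)) c).Infinite := by
  have hinf : (classSupport P (c.hom h)).Infinite := by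
    intro hfin
    obtain ⟨v, hvc⟩ := c.nonempty
    have hv : v ∈ classSupport P (c.hom h) := subset_classSupport _ (c.subset_hom h hvc)
    exact ComponentCompl.notMem_of_mem hvc (hPL ⟨_, ⟨⟨_, rfl⟩, hfin⟩, hv⟩)
  rw [classSupport_comap_hom]
  exact hinf.sdiff hL

end ClassSupport

namespace Gamma

variable {V : Type*} {G : SimpleGraph V} (γ : Gamma G) {Y : Finset V}

/-- The pullback of `γ = (X, P)` to a finite set `Y ⊇ X`: two components of `G − Y` are equivalent
iff the components of `G − X` containing them are. -/
def pullback (h : γ.X ⊆ Y) : Gamma G where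
  X := Y
  P := γ.P.comap (ComponentCompl.hom (Finset.coe_subset.mpr h))
  finiteClasses :=
    have := γ.finiteClasses
    Finite.of_equiv _ (Setoid.comapQuotientEquiv _ γ.P).symm

theorem le_pullback (h : γ.X ⊆ Y) : γ.le (γ.pullback h) :=
  ⟨h, fun _ _ => id⟩

theorem pullback_mem_Gamma' (h : γ.X ⊆ Y) (hY : finiteClassesSupport γ.P ⊆ Y) :
    (γ.pullback h).mem_Gamma' :=
  infinite_classSupport_comap_hom (Finset.coe_subset.mpr h) Y.finite_toSet hY

end Gamma

theorem gamma'_cofinal_general {V : Type*} (G : SimpleGraph V) (γ : Gamma G) :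
    ∃ γ' : Gamma G, γ.le γ' ∧ γ'.mem_Gamma' := by
  classical
  have := γ.finiteClasses
  have hfin : (finiteClassesSupport γ.P).Finite := finite_finiteClassesSupport γ.P
  have hX : γ.X ⊆ γ.X ∪ hfin.toFinset := Finset.subset_union_left
  have hY : finiteClassesSupport γ.P ⊆ ↑(γ.X ∪ hfin.toFinset) := by simp
  exact ⟨γ.pullback hX, γ.le_pullback hX, γ.pullback_mem_Gamma' hX hY⟩

/-- `Γ'` is cofinal in `Γ`. -/
theorem gamma'_cofinal {V : Type*} [Infinite V] (G : SimpleGraph V) (hG : G.Connected) :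
    ∀ γ : Gamma G, ∃ γ' : Gamma G, γ.le γ' ∧ γ'.mem_Gamma' :=
  gamma'_cofinal_general G
end

section
/- The tangle space Θ is homeomorphic to 𝒫; more precisely, the map sending each τ = (U_X)_{X : Finset V} ∈ Θ to the family (q_γ)_{γ ∈ Γ}, where q_γ is the unique element of Quotient γ.P with (U_{γ.X}).map (Quotient.mk γ.P) = pure q_γ, is a homeomorphism from Θ onto 𝒫. -/
open SimpleGraph

/-- The bonding map `Quotient δ.P → Quotient γ.P` for `γ ≤ δ`, sending `⟦c⟧` to
`⟦ComponentCompl.hom c⟧`. -/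
noncomputable def Gamma.bond {V : Type*} {G : SimpleGraph V} {γ δ : Gamma G} (h : γ.le δ) :
    Quotient δ.P → Quotient γ.P :=
  Quotient.map' (ComponentCompl.hom (Finset.coe_subset.mpr h.choose))
    (fun c c' hcc => h.choose_spec c c' hcc)

/-- The partition quotients carry the discrete topology. -/
instance {V : Type*} {G : SimpleGraph V} (γ : Gamma G) : TopologicalSpace (Quotient γ.P) := ⊥

instance {V : Type*} {G : SimpleGraph V} (γ : Gamma G) : DiscreteTopology (Quotient γ.P) :=
  ⟨rfl⟩

/-- The tangle space `Θ` of `G`: the inverse limit of the ultrafilter spaces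
`Ultrafilter (G.ComponentCompl X)` over the finite vertex sets `X`. -/
def TangleSpace {V : Type*} (G : SimpleGraph V) : Type _ :=
  {U : ∀ X : Finset V, Ultrafilter (G.ComponentCompl (X : Set V)) //
    ∀ (X Y : Finset V) (h : X ⊆ Y),
      (U Y).map (ComponentCompl.hom (Finset.coe_subset.mpr h)) = U X}

/-- The space `𝒫`: the inverse limit over `Γ` of the finite discrete spaces `Quotient γ.P`. -/
def PSpace {V : Type*} (G : SimpleGraph V) : Type _ :=
  {q : ∀ γ : Gamma G, Quotient γ.P //
    ∀ (γ δ : Gamma G) (h : γ.le δ), Gamma.bond h (q δ) = q γ}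

instance {V : Type*} (G : SimpleGraph V) : TopologicalSpace (TangleSpace G) :=
  instTopologicalSpaceSubtype

instance {V : Type*} (G : SimpleGraph V) : TopologicalSpace (PSpace G) :=
  instTopologicalSpaceSubtype

/-!
A point `q` of `𝒫` assigns a value to every function `f` from the components of `G − X` to a finite
type: the value of `f` on the class that `q` chooses in the partition of the components into the
fibres of `f`. Coherence of `q` makes this evaluation commute with composition on both sides, so it
respects all finitary logical connectives. Hence the sets whose indicator function evaluates to
`True` form an ultrafilter, and these ultrafilters are compatible as `X` varies. This inverts the
map `Θ → 𝒫`, since an ultrafilter likewise assigns a value to every function into a finite type: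
the point at which its pushforward is principal.
-/

section

variable {V : Type*} {G : SimpleGraph V}

attribute [instance] Gamma.finiteClasses

/-- The element of `Γ` given by the partition of the components of `G − X` into the fibres of a
function with finitely many values. -/
abbrev Gamma.ker {β : Type*} [Finite β] {X : Finset V}
    (f : G.ComponentCompl (X : Set V) → β) : Gamma G where
  X := X
  P := Setoid.ker f
  finiteClasses := Finite.of_injective _ (Setoid.kerLift_injective f)

theorem map_eq_pure_extend {α β : Type*} [Finite β] [TopologicalSpace β] [DiscreteTopology β]
    (f : α → β) (U : Ultrafilter α) : U.map f = pure (Ultrafilter.extend f U) := by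
  obtain ⟨b, hb⟩ := (U.map f).eq_pure_of_finite
  have hlim : Ultrafilter.extend f U = b := by
    rw [ultrafilter_extend_eq_iff, hb]
    exact pure_le_nhds b
  rw [hb, hlim]

namespace PSpace

variable {β β' δ : Type*} [Finite β] [Finite β'] [Finite δ] {X Y : Finset V}

/-- The value of a finite-valued function `f` on components at a point `q` of `𝒫`, namely the value
of `f` on the class that `q` chooses in the partition into fibres of `f`. -/
def eval (q : PSpace G) (f : G.ComponentCompl (X : Set V) → β) : β :=
  Setoid.kerLift f (q.val (Gamma.ker f))

theorem eval_eq_of_comp_hom_eq_comp_mk (q : PSpace G) {γ : Gamma G} (h : X ⊆ γ.X)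
    {f : G.ComponentCompl (X : Set V) → β} {g : Quotient γ.P → β}
    (hfg : f ∘ ComponentCompl.hom (Finset.coe_subset.mpr h) = g ∘ Quotient.mk γ.P) :
    q.eval f = g (q.val γ) := by
  have hle : (Gamma.ker f).le γ := by
    refine ⟨h, fun c c' hc => ?_⟩
    calc f (c.hom _) = g (Quotient.mk γ.P c) := congrFun hfg c
      _ = g (Quotient.mk γ.P c') := congrArg g (Quotient.sound hc)
      _ = f (c'.hom _) := (congrFun hfg c').symm
  obtain ⟨c, hc⟩ := Quotient.exists_rep (q.val γ)
  rw [eval, ← q.property _ _ hle, ← hc]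
  exact congrFun hfg c

theorem eval_comp_hom (q : PSpace G) (h : X ⊆ Y) (f : G.ComponentCompl (X : Set V) → β) :
    q.eval (f ∘ ComponentCompl.hom (Finset.coe_subset.mpr h)) = q.eval f :=
  (q.eval_eq_of_comp_hom_eq_comp_mk (γ := Gamma.ker (f ∘ ComponentCompl.hom _)) h
    (g := Setoid.kerLift _) rfl).symm

theorem eval_eq_of_eq_comp_mk (q : PSpace G) {γ : Gamma G}
    {f : G.ComponentCompl (γ.X : Set V) → β} {g : Quotient γ.P → β}
    (hfg : f = g ∘ Quotient.mk γ.P) : q.eval f = g (q.val γ) :=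
  q.eval_eq_of_comp_hom_eq_comp_mk Finset.Subset.rfl <| by
    funext c
    rw [Function.comp_apply, ComponentCompl.hom_refl, hfg]

theorem eval_mk (q : PSpace G) (γ : Gamma G) : q.eval (Quotient.mk γ.P) = q.val γ :=
  q.eval_eq_of_eq_comp_mk (g := id) rfl

theorem eval_comp (q : PSpace G) (g : β → β') (f : G.ComponentCompl (X : Set V) → β) :
    q.eval (g ∘ f) = g (q.eval f) :=
  q.eval_eq_of_eq_comp_mk (γ := Gamma.ker f) (g := g ∘ Setoid.kerLift f) rfl

theorem eval_const (q : PSpace G) (X : Finset V) (b : β) :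
    q.eval (fun _ : G.ComponentCompl (X : Set V) => b) = b :=
  q.eval_comp (fun _ : Unit => b) (fun _ => ())

theorem eval_map₂ (q : PSpace G) (g : β → β' → δ) (f : G.ComponentCompl (X : Set V) → β)
    (f' : G.ComponentCompl (X : Set V) → β') :
    q.eval (fun c => g (f c) (f' c)) = g (q.eval f) (q.eval f') := by
  let pair : G.ComponentCompl (X : Set V) → β × β' := fun c => (f c, f' c)
  have hfst : q.eval f = (q.eval pair).1 := q.eval_comp Prod.fst pair
  have hsnd : q.eval f' = (q.eval pair).2 := q.eval_comp Prod.snd pair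
  rw [hfst, hsnd]
  exact q.eval_comp (fun p : β × β' => g p.1 p.2) pair

theorem continuous_comp_val_apply {Z : Type*} [TopologicalSpace Z] (γ : Gamma G)
    (g : Quotient γ.P → Z) : Continuous fun q : PSpace G => g (q.val γ) := by
  have hval : Continuous fun q : PSpace G => q.val γ :=
    (continuous_apply γ).comp continuous_subtype_val
  exact continuous_of_discreteTopology.comp hval

theorem continuous_eval [TopologicalSpace β] (f : G.ComponentCompl (X : Set V) → β) :
    Continuous fun q : PSpace G => q.eval f :=
  continuous_comp_val_apply (Gamma.ker f) (Setoid.kerLift f)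

/-- The ultrafilter on the components of `G − X` induced by a point `q` of `𝒫`: a set belongs to it
when `q` evaluates its indicator function, taken with values in `Prop`, to `True`. -/
def toUltrafilter (q : PSpace G) (X : Finset V) : Ultrafilter (G.ComponentCompl (X : Set V)) :=
  Ultrafilter.ofComplNotMemIff
    { sets := {A | q.eval (· ∈ A)}
      univ_sets := (q.eval_const X True).mpr trivial
      sets_of_superset := fun {A B} hA hAB => by
        have hconst : (fun c => c ∈ A → c ∈ B) = fun _ => True :=
          funext fun c => eq_true (@hAB c)
        have himp : q.eval (fun c => c ∈ A → c ∈ B) := by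
          rw [hconst, eval_const]
          trivial
        exact (q.eval_map₂ (· → ·) (· ∈ A) (· ∈ B)).mp himp hA
      inter_sets := fun {A B} hA hB => (q.eval_map₂ And (· ∈ A) (· ∈ B)).mpr ⟨hA, hB⟩ }
    fun A => (not_congr (q.eval_comp Not (· ∈ A)).to_iff).trans not_not

theorem mem_toUltrafilter {q : PSpace G} {A : Set (G.ComponentCompl (X : Set V))} :
    A ∈ q.toUltrafilter X ↔ q.eval (· ∈ A) :=
  Iff.rfl

theorem map_toUltrafilter (q : PSpace G) (f : G.ComponentCompl (X : Set V) → β) :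
    (q.toUltrafilter X).map f = pure (q.eval f) := by
  ext S
  rw [Ultrafilter.mem_map, mem_toUltrafilter, Ultrafilter.mem_pure]
  exact (q.eval_comp (· ∈ S) f).to_iff

theorem map_hom_toUltrafilter (q : PSpace G) (h : X ⊆ Y) :
    (q.toUltrafilter Y).map (ComponentCompl.hom (Finset.coe_subset.mpr h)) =
      q.toUltrafilter X := by
  ext A
  rw [Ultrafilter.mem_map, mem_toUltrafilter, mem_toUltrafilter]
  exact (q.eval_comp_hom h (· ∈ A)).to_iff

theorem continuous_toUltrafilter (X : Finset V) :
    Continuous fun q : PSpace G => q.toUltrafilter X := by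
  refine ultrafilterBasis_is_basis.continuous_iff.mpr ?_
  rintro _ ⟨A, rfl⟩
  exact continuous_Prop.mp (continuous_eval (· ∈ A))

/-- The tangle induced by a point of `𝒫`. -/
def toTangle (q : PSpace G) : TangleSpace G :=
  ⟨q.toUltrafilter, fun _ _ h => q.map_hom_toUltrafilter h⟩

theorem continuous_toTangle : Continuous (toTangle : PSpace G → TangleSpace G) :=
  (continuous_pi continuous_toUltrafilter).subtype_mk _

end PSpace

namespace TangleSpace

/-- The class of the partition `γ.P` that belongs to the tangle `τ`, obtained as the limit of the
quotient map along the ultrafilter `τ.val γ.X`. -/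
noncomputable def classOf (τ : TangleSpace G) (γ : Gamma G) : Quotient γ.P :=
  Ultrafilter.extend (Quotient.mk γ.P) (τ.val γ.X)

theorem map_mk_eq_pure_classOf (τ : TangleSpace G) (γ : Gamma G) :
    (τ.val γ.X).map (Quotient.mk γ.P) = pure (τ.classOf γ) :=
  map_eq_pure_extend _ _

theorem bond_classOf (τ : TangleSpace G) {γ δ : Gamma G} (h : γ.le δ) :
    Gamma.bond h (τ.classOf δ) = τ.classOf γ := by
  apply Ultrafilter.pure_injective
  calc pure (Gamma.bond h (τ.classOf δ))
      = ((τ.val δ.X).map (Quotient.mk δ.P)).map (Gamma.bond h) := by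
        rw [map_mk_eq_pure_classOf, Ultrafilter.map_pure]
    _ = ((τ.val δ.X).map (ComponentCompl.hom (Finset.coe_subset.mpr h.choose))).map
          (Quotient.mk γ.P) := rfl
    _ = pure (τ.classOf γ) := by rw [τ.property _ _ h.choose, map_mk_eq_pure_classOf]

/-- The map `Θ → 𝒫` sending a tangle to its family of partition classes. -/
noncomputable def toPSpace (τ : TangleSpace G) : PSpace G :=
  ⟨τ.classOf, fun _ _ => τ.bond_classOf⟩

theorem continuous_val_apply (X : Finset V) : Continuous fun τ : TangleSpace G => τ.val X :=
  (continuous_apply X).comp continuous_subtype_val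

theorem continuous_classOf (γ : Gamma G) : Continuous fun τ : TangleSpace G => τ.classOf γ :=
  (continuous_ultrafilter_extend (Quotient.mk γ.P)).comp (continuous_val_apply γ.X)

theorem continuous_toPSpace : Continuous (toPSpace : TangleSpace G → PSpace G) :=
  (continuous_pi continuous_classOf).subtype_mk _

theorem map_eq_pure_eval_toPSpace {β : Type*} [Finite β] (τ : TangleSpace G) {X : Finset V}
    (f : G.ComponentCompl (X : Set V) → β) : (τ.val X).map f = pure (τ.toPSpace.eval f) :=
  calc (τ.val X).map f
      = ((τ.val X).map (Quotient.mk (Setoid.ker f))).map (Setoid.kerLift f) := rfl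
    _ = Ultrafilter.map (Setoid.kerLift f) (pure (τ.classOf (Gamma.ker f))) :=
        congrArg _ (τ.map_mk_eq_pure_classOf (Gamma.ker f))
    _ = pure (τ.toPSpace.eval f) := Ultrafilter.map_pure _ _

theorem mem_val_iff_eval_toPSpace (τ : TangleSpace G) {X : Finset V}
    (A : Set (G.ComponentCompl (X : Set V))) : A ∈ τ.val X ↔ τ.toPSpace.eval (· ∈ A) :=
  calc A ∈ τ.val X ↔ {p : Prop | p} ∈ (τ.val X).map (· ∈ A) := Iff.rfl
    _ ↔ {p : Prop | p} ∈ (pure (τ.toPSpace.eval (· ∈ A)) : Ultrafilter Prop) := by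
      rw [map_eq_pure_eval_toPSpace]
    _ ↔ τ.toPSpace.eval (· ∈ A) := Ultrafilter.mem_pure

theorem toTangle_toPSpace (τ : TangleSpace G) : τ.toPSpace.toTangle = τ :=
  Subtype.ext <| funext fun _ => Ultrafilter.ext fun A => (τ.mem_val_iff_eval_toPSpace A).symm

theorem toPSpace_toTangle (q : PSpace G) : q.toTangle.toPSpace = q := by
  refine Subtype.ext <| funext fun γ => Ultrafilter.pure_injective ?_
  calc pure (q.toTangle.classOf γ)
      = (q.toUltrafilter γ.X).map (Quotient.mk γ.P) := (q.toTangle.map_mk_eq_pure_classOf γ).symm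
    _ = pure (q.val γ) := by rw [q.map_toUltrafilter, q.eval_mk]

/-- The tangle space as an inverse limit of finite discrete spaces. -/
noncomputable def homeomorphPSpace (G : SimpleGraph V) : TangleSpace G ≃ₜ PSpace G where
  toFun := toPSpace
  invFun := PSpace.toTangle
  left_inv := toTangle_toPSpace
  right_inv := toPSpace_toTangle
  continuous_toFun := continuous_toPSpace
  continuous_invFun := PSpace.continuous_toTangle

end TangleSpace

end

theorem tangleSpace_homeo_PSpace_general {V : Type*} (G : SimpleGraph V) :
    ∃ φ : TangleSpace G ≃ₜ PSpace G,
      ∀ (τ : TangleSpace G) (γ : Gamma G),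
        (τ.val γ.X).map (Quotient.mk γ.P) = pure ((φ τ).val γ) :=
  ⟨TangleSpace.homeomorphPSpace G, TangleSpace.map_mk_eq_pure_classOf⟩

/-- The tangle space `Θ` is homeomorphic to `𝒫` via the map sending `τ = (U_X)` to the
family `(q_γ)`, where `q_γ` is characterised by `(U_{γ.X}).map (Quotient.mk γ.P) = pure q_γ`. -/
theorem tangleSpace_homeo_PSpace {V : Type*} [Infinite V] (G : SimpleGraph V)
    (hG : G.Connected) :
    ∃ φ : TangleSpace G ≃ₜ PSpace G,
      ∀ (τ : TangleSpace G) (γ : Gamma G),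
        (τ.val γ.X).map (Quotient.mk γ.P) = pure ((φ τ).val γ) := by
  exact tangleSpace_homeo_PSpace_general G
end

section
/- Let X be a normal Hausdorff space, D a nonempty type with the discrete topology, and f : X → D a continuous surjection. Let F : StoneCech X → Ultrafilter D be the continuous extension (stoneCechExtend) of the map x ↦ pure (f x). Then for every ultrafilter U on D, the fibre F ⁻¹' {U} equals ⋂_{J ∈ U} closure (stoneCechUnit '' (f ⁻¹' J)), the U-limit of the family of fibres of f. -/
/-!
The singleton `{U}` is the intersection of the clopen sets `{V | J ∈ V}` over `J ∈ U`, and a clopen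
subset of a space is the closure of its trace on any dense subset. The preimage of `{V | J ∈ V}`
under the extension is clopen, and its trace on `X` is `f ⁻¹' J`.
-/

section

variable {X Y D : Type*} [TopologicalSpace Y] {i : X → Y}

theorem isClopen_setOf_mem_ultrafilter (J : Set D) : IsClopen {V : Ultrafilter D | J ∈ V} :=
  ⟨ultrafilter_isClosed_basic J, ultrafilter_isOpen_basic J⟩

theorem iInter_setOf_mem_ultrafilter_eq_singleton (U : Ultrafilter D) :
    ⋂ J ∈ U, {V : Ultrafilter D | J ∈ V} = {U} := by
  ext V
  simp only [Set.mem_iInter, Set.mem_ofPred_eq, Set.mem_singleton_iff]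
  exact Ultrafilter.coe_le_coe (f := V) (g := U)

theorem closure_image_preimage_of_isClopen (hi : DenseRange i) {s : Set Y} (hs : IsClopen s) :
    closure (i '' (i ⁻¹' s)) = s :=
  (closure_minimal (Set.image_preimage_subset i s) hs.isClosed).antisymm
    (hi.subset_closure_image_preimage_of_isOpen hs.isOpen)

variable {f : X → D} {F : Y → Ultrafilter D}

theorem preimage_setOf_mem_ultrafilter_eq_closure (hi : DenseRange i) (hF : Continuous F)
    (hFi : ∀ x, F (i x) = pure (f x)) (J : Set D) :
    F ⁻¹' {V | J ∈ V} = closure (i '' (f ⁻¹' J)) := by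
  have trace_eq : i ⁻¹' (F ⁻¹' {V | J ∈ V}) = f ⁻¹' J := by
    ext x
    simp [hFi]
  rw [← trace_eq,
    closure_image_preimage_of_isClopen hi ((isClopen_setOf_mem_ultrafilter J).preimage hF)]

theorem fibre_stoneCechExtend_eq_ultrafilter_limit_general (hi : DenseRange i) (hF : Continuous F)
    (hFi : ∀ x, F (i x) = pure (f x)) (U : Ultrafilter D) :
    F ⁻¹' {U} = ⋂ J ∈ U, closure (i '' (f ⁻¹' J)) := by
  simp only [← iInter_setOf_mem_ultrafilter_eq_singleton U, Set.preimage_iInter,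
    preimage_setOf_mem_ultrafilter_eq_closure hi hF hFi]

end

/-- For a continuous surjection `f` from a normal Hausdorff space `X` onto a discrete space `D`,
the fibres of the Stone-Čech extension `F : βX → βD = Ultrafilter D` of `x ↦ pure (f x)`
are precisely the `U`-limits of the fibres of `f`: the fibre over an ultrafilter `U` equals
`⋂_{J ∈ U} closure (stoneCechUnit '' f ⁻¹' J)`. -/
theorem fibre_stoneCechExtend_eq_ultrafilter_limit
    {X D : Type*} [TopologicalSpace X] [T4Space X]
    [TopologicalSpace D] [DiscreteTopology D] [Nonempty D]
    (f : X → D) (hf : Continuous f) (hsurj : Function.Surjective f)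
    (U : Ultrafilter D) :
    stoneCechExtend (continuous_of_discreteTopology.comp hf :
        Continuous fun x => (pure (f x) : Ultrafilter D)) ⁻¹' {U} =
      ⋂ (J : Set D) (_ : J ∈ U), closure (stoneCechUnit '' (f ⁻¹' J)) :=
  fibre_stoneCechExtend_eq_ultrafilter_limit_general denseRange_stoneCechUnit
    (continuous_stoneCechExtend _) (stoneCechExtend_stoneCechUnit _) U
end

section
/- Let X be a normal Hausdorff space, D a nonempty type with the discrete topology, and f : X → D a continuous surjection. Let F : StoneCech X → Ultrafilter D be the continuous extension (stoneCechExtend) of the map x ↦ pure (f x). Then for every subset J ⊆ D, the closure of stoneCechUnit '' (f ⁻¹' J) in StoneCech X equals F ⁻¹' {U : Ultrafilter D | J ∈ U}. -/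
theorem closure_image_preimage_of_isClopen_s4 {Y Z : Type*} [TopologicalSpace Z]
    {e : Y → Z} (he : DenseRange e) {C : Set Z} (hC : IsClopen C) :
    closure (e '' (e ⁻¹' C)) = C :=
  (closure_minimal (Set.image_preimage_subset e C) hC.isClosed).antisymm
    (he.subset_closure_image_preimage_of_isOpen hC.isOpen)

theorem ultrafilter_isClopen_basic {D : Type*} (J : Set D) :
    IsClopen {U : Ultrafilter D | J ∈ U} :=
  ⟨ultrafilter_isClosed_basic J, ultrafilter_isOpen_basic J⟩

theorem closure_preimage_eq_preimage_stoneCechExtend_general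
    {X K : Type*} [TopologicalSpace X] [TopologicalSpace K] [CompactSpace K] [T2Space K]
    {g : X → K} (hg : Continuous g) {C : Set K} (hC : IsClopen C) :
    closure (stoneCechUnit '' (g ⁻¹' C)) = stoneCechExtend hg ⁻¹' C := by
  have preimage_eq : g ⁻¹' C = stoneCechUnit ⁻¹' (stoneCechExtend hg ⁻¹' C) := by
    rw [← Set.preimage_comp, stoneCechExtend_extends]
  rw [preimage_eq]
  exact closure_image_preimage_of_isClopen_s4 denseRange_stoneCechUnit
    (hC.preimage (continuous_stoneCechExtend hg))

/-- For a continuous surjection `f` from a normal Hausdorff space `X` onto a discrete space `D`,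
with `F : βX → βD = Ultrafilter D` the Stone-Čech extension of `x ↦ pure (f x)`:
for every `J ⊆ D`, the closure of `stoneCechUnit '' (f ⁻¹' J)` in `βX` equals
`F ⁻¹' {U | J ∈ U}`. -/
theorem closure_preimage_eq_preimage_stoneCechExtend
    {X D : Type*} [TopologicalSpace X] [T4Space X]
    [TopologicalSpace D] [DiscreteTopology D] [Nonempty D]
    (f : X → D) (hf : Continuous f) (hsurj : Function.Surjective f)
    (J : Set D) :
    closure (stoneCechUnit '' (f ⁻¹' J)) =
      stoneCechExtend (continuous_of_discreteTopology.comp hf :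
          Continuous fun x => (pure (f x) : Ultrafilter D)) ⁻¹'
        {U : Ultrafilter D | J ∈ U} :=
  closure_preimage_eq_preimage_stoneCechExtend_general (g := pure ∘ f)
    (continuous_of_discreteTopology.comp hf) (ultrafilter_isClopen_basic J)
end

section
/- Let I be a type with the discrete topology and K : I → Type a family of topological spaces, each compact, Hausdorff, and connected (hence nonempty). Let X := Σ i, K i be their topological sum and let F : StoneCech X → Ultrafilter I be the continuous extension (stoneCechExtend) of the map p ↦ pure p.1 (i.e. of pure composed with the projection Sigma.fst). Then the connected components of StoneCech X are exactly the fibres of F: for every a : StoneCech X, connectedComponent a = F ⁻¹' {F a}. -/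
variable {I : Type*} [TopologicalSpace I] [DiscreteTopology I]
  (K : I → Type*) [∀ i, TopologicalSpace (K i)]

/-- The projection of the topological sum `Σ i, K i` to `βI = Ultrafilter I`,
`p ↦ pure p.1`, is continuous. -/
theorem continuous_pure_sigma_fst :
    Continuous fun p : Σ i, K i => (pure p.1 : Ultrafilter I) :=
  continuous_sigma fun i =>
    (continuous_const : Continuous fun _ : K i => (pure i : Ultrafilter I))

/-!
In a compact Hausdorff space components are intersections of clopen sets, so a continuous map to a
totally disconnected space has the components as its fibres as soon as every clopen set of the
source is a union of fibres. By density of `X` in `βX`, a clopen set of `βX` is determined by its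
trace on `X`. If `f : X → I` has preconnected fibres, such a trace is `f ⁻¹' S` for some `S ⊆ I`, so
the clopen set itself is the preimage of the basic clopen set `{u | S ∈ u}` of `βI`.
-/

section Clopen

variable {X Y : Type*} [TopologicalSpace X] [TopologicalSpace Y]

theorem connectedComponent_eq_preimage_singleton_of_isClopen_eq_preimage
    [CompactSpace X] [T2Space X] [TotallyDisconnectedSpace Y] {F : X → Y} (hF : Continuous F)
    (h : ∀ Z : Set X, IsClopen Z → ∃ V : Set Y, F ⁻¹' V = Z) (a : X) :
    connectedComponent a = F ⁻¹' {F a} := by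
  refine (Set.image_subset_iff.mp (hF.image_connectedComponent_eq_singleton a).subset).antisymm ?_
  intro b (hb : F b = F a)
  rw [connectedComponent_eq_iInter_isClopen, Set.mem_iInter]
  rintro ⟨Z, hZ, haZ⟩
  obtain ⟨V, rfl⟩ := h Z hZ
  rwa [Set.mem_preimage, hb]

theorem subset_of_preimage_subset_preimage_of_denseRange {α : Type*} {e : α → Y}
    (he : DenseRange e) {U C : Set Y} (hU : IsOpen U) (hC : IsClosed C)
    (h : e ⁻¹' U ⊆ e ⁻¹' C) : U ⊆ C :=
  (he.subset_closure_image_preimage_of_isOpen hU).trans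
    (closure_minimal (Set.image_subset_iff.mpr h) hC)

theorem eq_of_preimage_eq_of_isClopen_of_denseRange {α : Type*} {e : α → Y} (he : DenseRange e)
    {Z W : Set Y} (hZ : IsClopen Z) (hW : IsClopen W) (h : e ⁻¹' Z = e ⁻¹' W) : Z = W :=
  (subset_of_preimage_subset_preimage_of_denseRange he hZ.isOpen hW.isClosed h.subset).antisymm
    (subset_of_preimage_subset_preimage_of_denseRange he hW.isOpen hZ.isClosed h.superset)

theorem preimage_image_eq_of_isClopen_of_isPreconnected_fibres {ι : Type*} {f : X → ι}
    (hf : ∀ i, IsPreconnected (f ⁻¹' {i})) {Z : Set X} (hZ : IsClopen Z) :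
    f ⁻¹' (f '' Z) = Z := by
  refine Set.Subset.antisymm ?_ (Set.subset_preimage_image f Z)
  rintro x ⟨z, hz, hzx⟩
  exact (hf (f x)).subset_isClopen hZ ⟨z, hzx, hz⟩ rfl

theorem connectedComponent_stoneCech_eq_fibre_of_isClopen_eq_preimage
    [CompactSpace Y] [T2Space Y] [TotallyDisconnectedSpace Y] {g : X → Y} (hg : Continuous g)
    (h : ∀ Z : Set X, IsClopen Z → ∃ V : Set Y, IsClopen V ∧ g ⁻¹' V = Z) (a : StoneCech X) :
    connectedComponent a = stoneCechExtend hg ⁻¹' {stoneCechExtend hg a} := by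
  have hF : Continuous (stoneCechExtend hg) := continuous_stoneCechExtend hg
  refine connectedComponent_eq_preimage_singleton_of_isClopen_eq_preimage hF (fun Z hZ => ?_) a
  obtain ⟨V, hV, hVZ⟩ := h (stoneCechUnit ⁻¹' Z) (hZ.preimage continuous_stoneCechUnit)
  refine ⟨V, eq_of_preimage_eq_of_isClopen_of_denseRange denseRange_stoneCechUnit
    (hV.preimage hF) hZ ?_⟩
  rw [← Set.preimage_comp, stoneCechExtend_extends, hVZ]

end Clopen

theorem isClopen_setOf_mem_ultrafilter_s7 {ι : Type*} (S : Set ι) :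
    IsClopen {u : Ultrafilter ι | S ∈ u} :=
  ⟨ultrafilter_isClosed_basic S, ultrafilter_isOpen_basic S⟩

theorem isPreconnected_sigma_fst_preimage_singleton {ι : Type*} {X : ι → Type*}
    [∀ i, TopologicalSpace (X i)] (i : ι) [PreconnectedSpace (X i)] :
    IsPreconnected ((Sigma.fst : (Σ i, X i) → ι) ⁻¹' {i}) := by
  rw [← Set.range_sigmaMk]
  exact isPreconnected_range continuous_sigmaMk

/-- Principal ultrafilters are isolated points of `Ultrafilter ι`, so `hf` says that `f` is locally
constant. -/
theorem connectedComponent_stoneCech_sigma_eq_fibre_general {ι X : Type*} [TopologicalSpace X]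
    {f : X → ι} (hf : Continuous fun x => (pure (f x) : Ultrafilter ι))
    (hfib : ∀ i, IsPreconnected (f ⁻¹' {i})) (a : StoneCech X) :
    connectedComponent a = stoneCechExtend hf ⁻¹' {stoneCechExtend hf a} :=
  connectedComponent_stoneCech_eq_fibre_of_isClopen_eq_preimage hf
    (fun Z hZ => ⟨{u | f '' Z ∈ u}, isClopen_setOf_mem_ultrafilter_s7 _,
      preimage_image_eq_of_isClopen_of_isPreconnected_fibres hfib hZ⟩) a

/-- For a topological sum `X = Σ i, K i` of continua over a discrete index type `I`, the
connected components of `βX` are exactly the fibres of the Stone-Čech extension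
`F : βX → βI = Ultrafilter I` of the projection `p ↦ pure p.1`. -/
theorem connectedComponent_stoneCech_sigma_eq_fibre
    [∀ i, CompactSpace (K i)] [∀ i, T2Space (K i)] [∀ i, ConnectedSpace (K i)]
    (a : StoneCech (Σ i, K i)) :
    connectedComponent a =
      stoneCechExtend (continuous_pure_sigma_fst K) ⁻¹'
        {stoneCechExtend (continuous_pure_sigma_fst K) a} :=
  connectedComponent_stoneCech_sigma_eq_fibre_general (continuous_pure_sigma_fst K)
    (fun i => isPreconnected_sigma_fst_preimage_singleton i) a
end

section
/- Let E be a type with the discrete topology, X := E × unitInterval, and let F : StoneCech X → Ultrafilter E be the continuous extension (stoneCechExtend) of the map p ↦ pure p.1. Let U be a free ultrafilter on E (i.e. U ≠ pure e for every e : E), let 0_U (respectively 1_U) be the unique point of StoneCech X to which the family fun e => stoneCechUnit (e, 0) (respectively fun e => stoneCechUnit (e, 1)) converges along U, and set 𝕀_U := F ⁻¹' {U}. Then each of the three sets 𝕀_U \ {0_U}, 𝕀_U \ {1_U}, and 𝕀_U \ {0_U, 1_U} is a connected subset of StoneCech X. -/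
open Filter Topology

/-!
Let `K` be connected and `S ⊆ K` closed. A disconnection of the fiber over `U` extends to two
disjoint open sets which cover `{e} × K` for `U`-almost all `e`; each `{e} × K` is connected, hence
lies in one of them, and since `U` is an ultrafilter the same one is chosen almost everywhere. So
the fiber is connected.

Write `C` for the closure of `E × S` in `β(E × K)`, and let `x`, `y` be points of the fiber outside
`C`. A closed neighbourhood of `C` avoiding `x` and `y` traces a neighbourhood of `S` on each
`{e} × K`. If `K` can be mapped into itself off `S` without moving anything outside that
neighbourhood (for an endpoint of an interval: by clamping), then doing so on every `{e} × K`
simultaneously extends to a self-map of `β(E × K)` which fixes `x` and `y` and sends the fiber to a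
connected subset of the fiber minus `C`; Urysohn functions on the sets `{e} × K`, extended to
`β(E × K)`, show that the image avoids `C`. For `S = {0}`, `{1}` and `{0, 1}` the set `C` meets the
fiber exactly in the corresponding endpoints.
-/

/-- A set `S` is pushable if, for each of its neighbourhoods `N`, the space can be mapped into
itself away from `S` while fixing every point outside `N`. Staying away from `S` refers to the
closure of the image, so that in a normal space a closed `S` can be separated from it by a
continuous function. -/
def IsPushable {K : Type*} [TopologicalSpace K] (S : Set K) : Prop :=
  ∀ N ∈ 𝓝ˢ S, ∃ r : C(K, K), (∀ t ∉ N, r t = t) ∧ Disjoint (closure (Set.range r)) S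

section LinearOrder

variable {K : Type*} [LinearOrder K] [TopologicalSpace K] [OrderTopology K] [Nontrivial K]

theorem isPushable_singleton_bot [OrderBot K] : IsPushable {(⊥ : K)} := by
  intro N hN
  rw [nhdsSet_singleton] at hN
  obtain ⟨a, ha, haN⟩ :=
    exists_Ico_subset_of_mem_nhds hN ((exists_ne ⊥).imp fun _ => bot_lt_iff_ne_bot.2)
  refine ⟨⟨fun t => max t a, by fun_prop⟩, fun t ht => max_eq_left ?_, ?_⟩
  · exact not_lt.1 fun hlt => ht (haN ⟨bot_le, hlt⟩)
  · have hrange : closure (Set.range fun t => max t a) ⊆ Set.Ici a :=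
      closure_minimal (Set.range_subset_iff.2 fun t => le_max_right t a) isClosed_Ici
    exact Set.disjoint_singleton_right.2 fun h => ha.not_ge (hrange h)

theorem isPushable_singleton_top [OrderTop K] : IsPushable {(⊤ : K)} :=
  isPushable_singleton_bot (K := Kᵒᵈ)

theorem isPushable_pair_bot_top [BoundedOrder K] [DenselyOrdered K] :
    IsPushable {(⊥ : K), ⊤} := by
  intro N hN
  rw [Set.insert_eq, nhdsSet_union, nhdsSet_singleton, nhdsSet_singleton, mem_sup] at hN
  obtain ⟨m, hm, hm'⟩ := exists_between (bot_lt_top (α := K))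
  obtain ⟨a, ⟨ha, ham⟩, haN⟩ := exists_Ico_subset_of_mem_nhds' hN.1 hm
  obtain ⟨b, ⟨hmb, hb⟩, hbN⟩ := exists_Ioc_subset_of_mem_nhds' hN.2 hm'
  refine ⟨⟨fun t => max a (min t b), by fun_prop⟩, fun t ht => ?_, ?_⟩
  · have hat : a ≤ t := not_lt.1 fun hlt => ht (haN ⟨bot_le, hlt⟩)
    have htb : t ≤ b := not_lt.1 fun hlt => ht (hbN ⟨hlt, le_top⟩)
    simp [hat, htb]
  · have hrange : closure (Set.range fun t => max a (min t b)) ⊆ Set.Icc a b :=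
      closure_minimal (Set.range_subset_iff.2 fun t =>
        ⟨le_max_left _ _, max_le (ham.trans hmb) (min_le_right _ _)⟩) isClosed_Icc
    refine Set.disjoint_right.2 ?_
    rintro _ (rfl | rfl) h
    exacts [ha.not_ge (hrange h).1, hb.not_ge (hrange h).2]

end LinearOrder

theorem comap_stoneCechUnit_nhds_neBot {X : Type*} [TopologicalSpace X] (x : StoneCech X) :
    (comap stoneCechUnit (𝓝 x)).NeBot :=
  comap_neBot_iff_frequently.2 (mem_closure_iff_frequently.1 (denseRange_stoneCechUnit x))

section Fiber

variable {E K L : Type*} [TopologicalSpace E] [DiscreteTopology E] [TopologicalSpace K]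
  [TopologicalSpace L]

theorem continuous_uncurry_of_discreteTopology (f : E → C(K, L)) :
    Continuous fun p : E × K => f p.1 p.2 :=
  continuous_prod_of_discrete_left.2 fun e => (f e).continuous

theorem disjoint_closure_image_stoneCechUnit [NormalSpace K] {A B : E → Set K}
    (hA : ∀ e, IsClosed (A e)) (hB : ∀ e, IsClosed (B e)) (hAB : ∀ e, Disjoint (A e) (B e)) :
    Disjoint (closure (stoneCechUnit '' {p : E × K | p.2 ∈ A p.1}))
      (closure (stoneCechUnit '' {p : E × K | p.2 ∈ B p.1})) := by
  choose f hfA hfB hf using fun e => exists_continuous_zero_one_of_isClosed (hA e) (hB e) (hAB e)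
  let g : E → C(K, unitInterval) := fun e => ⟨fun t => ⟨f e t, hf e t⟩, by fun_prop⟩
  let G := stoneCechExtend (continuous_uncurry_of_discreteTopology g)
  have hG : Continuous G := continuous_stoneCechExtend _
  refine Disjoint.mono (closure_minimal ?_ (isClosed_singleton.preimage hG))
    (closure_minimal ?_ (isClosed_singleton.preimage hG))
    (Disjoint.preimage G (Set.disjoint_singleton.2 (zero_ne_one (α := unitInterval))))
  · rintro _ ⟨⟨e, t⟩, ht, rfl⟩
    exact (stoneCechExtend_stoneCechUnit _ _).trans (Subtype.ext (hfA e ht))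
  · rintro _ ⟨⟨e, t⟩, ht, rfl⟩
    exact (stoneCechExtend_stoneCechUnit _ _).trans (Subtype.ext (hfB e ht))

/-- The map `β(E × K) → βE` extending the projection; `βE` is modelled by `Ultrafilter E`. -/
noncomputable def stoneCechFst : StoneCech (E × K) → Ultrafilter E :=
  stoneCechExtend (continuous_of_discreteTopology.comp continuous_fst :
    Continuous fun p : E × K => (pure p.1 : Ultrafilter E))

theorem continuous_stoneCechFst : Continuous (stoneCechFst : StoneCech (E × K) → Ultrafilter E) :=
  continuous_stoneCechExtend _

@[simp]
theorem stoneCechFst_stoneCechUnit (p : E × K) : stoneCechFst (stoneCechUnit p) = pure p.1 :=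
  stoneCechExtend_stoneCechUnit _ p

theorem tendsto_fst_comap_stoneCechUnit_nhds (x : StoneCech (E × K)) :
    Tendsto Prod.fst (comap stoneCechUnit (𝓝 x)) (stoneCechFst x : Filter E) := by
  have hpure : Tendsto (pure ∘ Prod.fst) (comap stoneCechUnit (𝓝 x)) (𝓝 (stoneCechFst x)) := by
    have hfst := (continuous_stoneCechFst.tendsto x).comp
      (tendsto_comap (f := (stoneCechUnit : E × K → _)))
    rwa [show stoneCechFst ∘ stoneCechUnit = pure ∘ (Prod.fst : E × K → E) from
      funext stoneCechFst_stoneCechUnit] at hfst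
  exact (tendsto_comap_iff.2 hpure).mono_right (ultrafilter_comap_pure_nhds _)

/-- The fiber of `β(E × K)` over the ultrafilter `U`. For `K = unitInterval` and `U` free this is
the non-standard interval `𝕀_U`. -/
def nonstandardFiber (K : Type*) [TopologicalSpace K] (U : Ultrafilter E) :
    Set (StoneCech (E × K)) :=
  stoneCechFst ⁻¹' {U}

theorem isClosed_nonstandardFiber (U : Ultrafilter E) : IsClosed (nonstandardFiber K U) :=
  isClosed_singleton.preimage continuous_stoneCechFst

theorem mem_nonstandardFiber_of_tendsto {U : Ultrafilter E} {f : E → K} {z : StoneCech (E × K)}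
    (hz : Tendsto (fun e => stoneCechUnit (e, f e)) U (𝓝 z)) : z ∈ nonstandardFiber K U := by
  have hfst := (continuous_stoneCechFst.tendsto z).comp hz
  simp only [Function.comp_def, stoneCechFst_stoneCechUnit] at hfst
  exact tendsto_nhds_unique hfst U.tendsto_pure_self

theorem nonstandardFiber_nonempty [Nonempty K] (U : Ultrafilter E) :
    (nonstandardFiber K U).Nonempty :=
  ⟨_, mem_nonstandardFiber_of_tendsto (f := fun _ => Classical.arbitrary K)
    (ultrafilter_extend_eq_iff.1 rfl)⟩

theorem exists_stoneCechUnit_mem_of_mem_nhds {U : Ultrafilter E} {x : StoneCech (E × K)}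
    (hx : x ∈ nonstandardFiber K U) {N : Set (StoneCech (E × K))} (hN : N ∈ 𝓝 x) {p : E → Prop}
    (hp : ∀ᶠ e in U, p e) : ∃ e, p e ∧ ∃ t, stoneCechUnit (e, t) ∈ N := by
  have := comap_stoneCechUnit_nhds_neBot x
  have hfst := tendsto_fst_comap_stoneCechUnit_nhds x
  rw [show stoneCechFst x = U from hx] at hfst
  obtain ⟨⟨e, t⟩, he, ht⟩ := ((hfst.eventually hp).and (preimage_mem_comap hN)).exists
  exact ⟨e, he, t, ht⟩

theorem isPreconnected_nonstandardFiber [PreconnectedSpace K] (U : Ultrafilter E) :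
    IsPreconnected (nonstandardFiber K U) := by
  rw [isPreconnected_iff_subset_of_fully_disjoint_closed (isClosed_nonstandardFiber U)]
  intro A B hA hB hAB hdisj
  obtain ⟨V, W, hV, hW, hAV, hBW, hVW⟩ := normal_separation hA hB hdisj
  have hslice : ∀ᶠ e in U, Set.range (fun t : K => stoneCechUnit (e, t)) ⊆ V ∪ W := by
    have hfiber := continuous_stoneCechFst.isClosedMap.eventually_nhds_fiber U fun x hx =>
      (hV.union hW).mem_nhds (Set.union_subset_union hAV hBW (hAB hx))
    filter_upwards [U.tendsto_pure_self.eventually hfiber] with e he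
    exact Set.range_subset_iff.2 fun t => he _ (stoneCechFst_stoneCechUnit _)
  have hchoice : ∀ᶠ e in U, Set.range (fun t : K => stoneCechUnit (e, t)) ⊆ V ∨
      Set.range (fun t : K => stoneCechUnit (e, t)) ⊆ W := by
    filter_upwards [hslice] with e he
    exact (isPreconnected_range (continuous_stoneCechUnit.comp (by fun_prop))).subset_or_subset
      hV hW hVW he
  refine (Ultrafilter.eventually_or.1 hchoice).imp (fun hev x hx => ?_) fun hev x hx => ?_
  · refine (hAB hx).resolve_right fun hxB => ?_
    obtain ⟨e, he, t, ht⟩ := exists_stoneCechUnit_mem_of_mem_nhds hx (hW.mem_nhds (hBW hxB)) hev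
    exact Set.disjoint_left.1 hVW (he ⟨t, rfl⟩) ht
  · refine (hAB hx).resolve_left fun hxA => ?_
    obtain ⟨e, he, t, ht⟩ := exists_stoneCechUnit_mem_of_mem_nhds hx (hV.mem_nhds (hAV hxA)) hev
    exact Set.disjoint_left.1 hVW ht (he ⟨t, rfl⟩)

end Fiber

section HorizontalClosure

variable {E K : Type*} [TopologicalSpace E] [TopologicalSpace K]

/-- The closure of `E × S` in `β(E × K)`. For `S = {k}` it meets the fiber over `U` exactly in the
limit of `e ↦ (e, k)` along `U`. -/
def horizontalClosure (E : Type*) [TopologicalSpace E] (S : Set K) : Set (StoneCech (E × K)) :=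
  closure (stoneCechUnit '' (Prod.snd ⁻¹' S))

theorem isClosed_horizontalClosure (S : Set K) : IsClosed (horizontalClosure E S) :=
  isClosed_closure

theorem stoneCechUnit_mem_horizontalClosure {S : Set K} (e : E) {t : K} (ht : t ∈ S) :
    stoneCechUnit (e, t) ∈ horizontalClosure E S :=
  subset_closure ⟨(e, t), ht, rfl⟩

theorem horizontalClosure_union (S T : Set K) :
    horizontalClosure E (S ∪ T) = horizontalClosure E S ∪ horizontalClosure E T := by
  simp only [horizontalClosure, Set.preimage_union, Set.image_union, closure_union]

variable [DiscreteTopology E]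

theorem nonstandardFiber_inter_horizontalClosure_singleton {U : Ultrafilter E} {k : K}
    {z : StoneCech (E × K)} (hz : Tendsto (fun e => stoneCechUnit (e, k)) U (𝓝 z)) :
    nonstandardFiber K U ∩ horizontalClosure E {k} = {z} := by
  refine Set.Subset.antisymm ?_ (Set.singleton_subset_iff.2
    ⟨mem_nonstandardFiber_of_tendsto hz, (isClosed_horizontalClosure _).mem_of_tendsto hz <|
      .of_forall fun e => stoneCechUnit_mem_horizontalClosure e rfl⟩)
  rintro x ⟨hxU, hxk⟩
  let l := comap stoneCechUnit (𝓝 x) ⊓ 𝓟 (Prod.snd ⁻¹' {k} : Set (E × K))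
  have : l.NeBot := by
    rwa [horizontalClosure, mem_closure_iff_clusterPt, ClusterPt, ← map_principal, inf_comm,
      ← neBot_inf_comap_iff_map, inf_comm] at hxk
  have hlx : Tendsto stoneCechUnit l (𝓝 x) := tendsto_comap.mono_left inf_le_left
  have hlU : Tendsto Prod.fst l (U : Filter E) := by
    rw [← show stoneCechFst x = U from hxU]
    exact (tendsto_fst_comap_stoneCechUnit_nhds x).mono_left inf_le_left
  have hlz : Tendsto stoneCechUnit l (𝓝 z) := by
    refine (hz.comp hlU).congr' ?_
    filter_upwards [mem_inf_of_right (mem_principal_self _)] with p hp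
    rw [Function.comp_apply, ← show p.2 = k from hp]
  exact tendsto_nhds_unique hlx hlz

end HorizontalClosure

section FiberwiseMap

variable {E K L : Type*} [TopologicalSpace E] [DiscreteTopology E] [TopologicalSpace K]
  [TopologicalSpace L]

/-- The map `β(E × K) → β(E × L)` extending `(e, t) ↦ (e, c e t)`. -/
noncomputable def fiberwiseMap (c : E → C(K, L)) : StoneCech (E × K) → StoneCech (E × L) :=
  stoneCechExtend (continuous_stoneCechUnit.comp
    (continuous_fst.prodMk (continuous_uncurry_of_discreteTopology c)))

theorem continuous_fiberwiseMap (c : E → C(K, L)) : Continuous (fiberwiseMap c) :=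
  continuous_stoneCechExtend _

@[simp]
theorem fiberwiseMap_stoneCechUnit (c : E → C(K, L)) (p : E × K) :
    fiberwiseMap c (stoneCechUnit p) = stoneCechUnit (p.1, c p.1 p.2) :=
  stoneCechExtend_stoneCechUnit _ p

@[simp]
theorem stoneCechFst_fiberwiseMap (c : E → C(K, L)) (x : StoneCech (E × K)) :
    stoneCechFst (fiberwiseMap c x) = stoneCechFst x := by
  refine congrFun (stoneCech_hom_ext
    (continuous_stoneCechFst.comp (continuous_fiberwiseMap c)) continuous_stoneCechFst ?_) x
  ext1 p
  simp only [Function.comp_apply, fiberwiseMap_stoneCechUnit, stoneCechFst_stoneCechUnit]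

theorem fiberwiseMap_mem_closure (c : E → C(K, L)) (x : StoneCech (E × K)) :
    fiberwiseMap c x ∈
      closure (stoneCechUnit '' {p : E × L | p.2 ∈ closure (Set.range (c p.1))}) := by
  refine denseRange_stoneCechUnit.induction_on x
    (isClosed_closure.preimage (continuous_fiberwiseMap c)) fun p => ?_
  rw [fiberwiseMap_stoneCechUnit]
  exact subset_closure ⟨_, subset_closure ⟨p.2, rfl⟩, rfl⟩

theorem fiberwiseMap_eq_self {c : E → C(K, K)} {x : StoneCech (E × K)}
    (hc : ∀ᶠ p in comap stoneCechUnit (𝓝 x), c p.1 p.2 = p.2) : fiberwiseMap c x = x := by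
  have := comap_stoneCechUnit_nhds_neBot x
  have hlim : Tendsto stoneCechUnit (comap stoneCechUnit (𝓝 x)) (𝓝 x) := tendsto_comap
  refine tendsto_nhds_unique (((continuous_fiberwiseMap c).tendsto x).comp hlim)
    (hlim.congr' ?_)
  filter_upwards [hc] with p hp
  simp [hp]

variable [NormalSpace K] {S : Set K}

theorem IsPushable.exists_fiberwiseMap (hS : IsPushable S) (hSc : IsClosed S)
    {D : Set (StoneCech (E × K))} (hD : IsClosed D) (hDS : Disjoint D (horizontalClosure E S)) :
    ∃ c : E → C(K, K), (∀ x ∈ D, fiberwiseMap c x = x) ∧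
      ∀ x, fiberwiseMap c x ∉ horizontalClosure E S := by
  obtain ⟨V, W, hV, hW, hDV, hSW, hVW⟩ :=
    normal_separation hD (isClosed_horizontalClosure S) hDS
  have hN (e : E) : (fun t : K => stoneCechUnit (e, t)) ⁻¹' W ∈ 𝓝ˢ S :=
    (hW.preimage (continuous_stoneCechUnit.comp (by fun_prop))).mem_nhdsSet.2
      fun t ht => hSW (stoneCechUnit_mem_horizontalClosure e ht)
  choose c hcfix hcS using fun e => hS _ (hN e)
  refine ⟨c, fun x hx => fiberwiseMap_eq_self ?_, fun x => ?_⟩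
  · filter_upwards [preimage_mem_comap (hV.mem_nhds (hDV hx))] with p hp
    exact hcfix p.1 p.2 (Set.disjoint_left.1 hVW hp)
  · exact Set.disjoint_left.1 (disjoint_closure_image_stoneCechUnit
      (fun _ => isClosed_closure) (fun _ => hSc) hcS) (fiberwiseMap_mem_closure c x)

theorem IsPushable.isConnected_nonstandardFiber_diff [ConnectedSpace K] (hS : IsPushable S)
    (hSc : IsClosed S) (U : Ultrafilter E) :
    IsConnected (nonstandardFiber K U \ horizontalClosure E S) := by
  have hmaps {c : E → C(K, K)} (hc : ∀ x, fiberwiseMap c x ∉ horizontalClosure E S) :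
      Set.MapsTo (fiberwiseMap c) (nonstandardFiber K U)
        (nonstandardFiber K U \ horizontalClosure E S) := fun x hx =>
    ⟨(stoneCechFst_fiberwiseMap c x).trans hx, hc x⟩
  constructor
  · obtain ⟨c, -, hc⟩ := hS.exists_fiberwiseMap (E := E) hSc isClosed_empty
      (Set.empty_disjoint _)
    exact (nonstandardFiber_nonempty U).image (fiberwiseMap c) |>.mono (hmaps hc).image_subset
  · refine isPreconnected_of_forall_pair fun x hx y hy => ?_
    obtain ⟨c, hfix, hc⟩ := hS.exists_fiberwiseMap (D := {x, y}) hSc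
      (Set.toFinite _).isClosed (by simp [hx.2, hy.2])
    exact ⟨fiberwiseMap c '' nonstandardFiber K U, (hmaps hc).image_subset,
      ⟨x, hx.1, hfix x (by simp)⟩, ⟨y, hy.1, hfix y (by simp)⟩,
      (isPreconnected_nonstandardFiber U).image _ (continuous_fiberwiseMap c).continuousOn⟩

end FiberwiseMap

theorem nonstandard_interval_remove_endpoints_connected_general
    {E K : Type*} [TopologicalSpace E] [DiscreteTopology E]
    [LinearOrder K] [BoundedOrder K] [Nontrivial K] [TopologicalSpace K] [OrderTopology K]
    [PreconnectedSpace K] (U : Ultrafilter E) (botU topU : StoneCech (E × K))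
    (hbot : Tendsto (fun e : E => stoneCechUnit (e, (⊥ : K))) U (𝓝 botU))
    (htop : Tendsto (fun e : E => stoneCechUnit (e, (⊤ : K))) U (𝓝 topU)) :
    IsConnected (nonstandardFiber K U \ {botU}) ∧
      IsConnected (nonstandardFiber K U \ {topU}) ∧
      IsConnected (nonstandardFiber K U \ {botU, topU}) := by
  have : ConnectedSpace K := ⟨inferInstance⟩
  have : DenselyOrdered K := denselyOrdered_of_preconnectedSpace
  have hbotU := nonstandardFiber_inter_horizontalClosure_singleton hbot
  have htopU := nonstandardFiber_inter_horizontalClosure_singleton htop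
  have hpair : nonstandardFiber K U ∩ horizontalClosure E {⊥, ⊤} = {botU, topU} := by
    rw [Set.insert_eq, horizontalClosure_union, Set.inter_union_distrib_left, hbotU, htopU,
      Set.insert_eq]
  rw [← hpair, ← hbotU, ← htopU, Set.sdiff_self_inter, Set.sdiff_self_inter, Set.sdiff_self_inter]
  exact ⟨isPushable_singleton_bot.isConnected_nonstandardFiber_diff isClosed_singleton U,
    isPushable_singleton_top.isConnected_nonstandardFiber_diff isClosed_singleton U,
    isPushable_pair_bot_top.isConnected_nonstandardFiber_diff (Set.toFinite _).isClosed U⟩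

/-- Removing one or both endpoints `0_U`, `1_U` from a non-standard interval
`𝕀_U ⊆ β(E × 𝕀)` (the fibre over a free ultrafilter `U` of the Stone-Čech extension of the
projection) leaves a connected set: each of `𝕀_U \ {0_U}`, `𝕀_U \ {1_U}` and
`𝕀_U \ {0_U, 1_U}` is connected. -/
theorem nonstandard_interval_remove_endpoints_connected
    {E : Type*} [TopologicalSpace E] [DiscreteTopology E]
    (U : Ultrafilter E) (hU : ∀ e : E, U ≠ pure e)
    (zeroU oneU : StoneCech (E × unitInterval))
    (hzero : Filter.Tendsto (fun e : E => stoneCechUnit (e, (0 : unitInterval)))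
      ↑U (𝓝 zeroU))
    (hone : Filter.Tendsto (fun e : E => stoneCechUnit (e, (1 : unitInterval)))
      ↑U (𝓝 oneU)) :
    IsConnected
        ((stoneCechExtend (continuous_of_discreteTopology.comp continuous_fst :
            Continuous fun p : E × unitInterval => (pure p.1 : Ultrafilter E)) ⁻¹' {U})
          \ {zeroU}) ∧
      IsConnected
        ((stoneCechExtend (continuous_of_discreteTopology.comp continuous_fst :
            Continuous fun p : E × unitInterval => (pure p.1 : Ultrafilter E)) ⁻¹' {U})
          \ {oneU}) ∧
      IsConnected
        ((stoneCechExtend (continuous_of_discreteTopology.comp continuous_fst :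
            Continuous fun p : E × unitInterval => (pure p.1 : Ultrafilter E)) ⁻¹' {U})
          \ {zeroU, oneU}) :=
  nonstandard_interval_remove_endpoints_connected_general U zeroU oneU hzero hone
end

section
/- Let X be a normal Hausdorff space and V ⊆ X a closed subset carrying the discrete subspace topology. Let s be an equivalence relation on X such that any two distinct related points both lie in V (i.e. s.Rel x y implies x = y or (x ∈ V ∧ y ∈ V)). Then the quotient space Quotient s is again a normal Hausdorff space. -/
/-!
A continuous closed surjection carries the T₄ property from its domain to its codomain, so it
suffices that the projection to the quotient is closed. The saturation of a closed set `C` is `C`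
together with a subset of `V`, and every subset of the closed discrete set `V` is closed in `X`.
-/

open Filter Function Set Topology

section

variable {X Y : Type*} {f : X → Y} {V : Set X}

theorem preimage_image_eq_union_inter (hfV : ∀ x y, f x = f y → x = y ∨ y ∈ V) (C : Set X) :
    f ⁻¹' (f '' C) = C ∪ f ⁻¹' (f '' C) ∩ V := by
  refine Subset.antisymm ?_ (union_subset (subset_preimage_image f C) inter_subset_left)
  rintro y ⟨x, hxC, hxy⟩
  rcases hfV x y hxy with rfl | hyV
  · exact Or.inl hxC
  · exact Or.inr ⟨⟨x, hxC, hxy⟩, hyV⟩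

variable [TopologicalSpace X] [TopologicalSpace Y]

theorem isClosedMap_of_isCoinducing_of_isDiscrete (hf : IsCoinducing f) (hVc : IsClosed V)
    (hVd : IsDiscrete V) (hfV : ∀ x y, f x = f y → x = y ∨ y ∈ V) : IsClosedMap f := by
  intro C hC
  rw [← hf.isClosed_preimage, preimage_image_eq_union_inter hfV]
  exact hC.union (isClosed_of_subset_discrete_closed inter_subset_right hVd hVc)

theorem t1Space_of_isClosedMap [T1Space X] (hf : IsClosedMap f) (hsurj : Surjective f) :
    T1Space Y where
  t1 := hsurj.forall.2 fun x ↦ image_singleton (f := f) ▸ hf {x} isClosed_singleton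

theorem normalSpace_of_isClosedMap [NormalSpace X] (hf : IsClosedMap f) (hcont : Continuous f)
    (hsurj : Surjective f) : NormalSpace Y where
  normal A B hA hB hAB := by
    have hpre : Disjoint (𝓝ˢ (f ⁻¹' A)) (𝓝ˢ (f ⁻¹' B)) :=
      disjoint_nhdsSet_nhdsSet (hA.preimage hcont) (hB.preimage hcont) (hAB.preimage f)
    have hcomap : Disjoint (comap f (𝓝ˢ A)) (comap f (𝓝ˢ B)) :=
      hpre.mono hf.comap_nhdsSet_le hf.comap_nhdsSet_le
    exact separatedNhds_iff_disjoint.2 ((disjoint_comap_iff hsurj).1 hcomap)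

theorem t4Space_of_isClosedMap [T4Space X] (hf : IsClosedMap f) (hcont : Continuous f)
    (hsurj : Surjective f) : T4Space Y where
  toT1Space := t1Space_of_isClosedMap hf hsurj
  toNormalSpace := normalSpace_of_isClosedMap hf hcont hsurj

end

/-- Let `X` be a normal Hausdorff space and `V ⊆ X` a closed discrete subset. If `s` is an
equivalence relation on `X` all of whose nontrivial identifications happen inside `V`, then
the quotient `X/s` is again a normal Hausdorff space. -/
theorem quotient_normal_of_rel_subset_closed_discrete
    {X : Type*} [TopologicalSpace X] [T4Space X]
    (V : Set X) (hVclosed : IsClosed V) (hVdiscrete : DiscreteTopology V)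
    (s : Setoid X) (hs : ∀ x y : X, s.r x y → x = y ∨ (x ∈ V ∧ y ∈ V)) :
    T4Space (Quotient s) := by
  have hquot : IsQuotientMap (Quotient.mk s) := isQuotientMap_quot_mk
  have hfiber : ∀ x y, Quotient.mk s x = Quotient.mk s y → x = y ∨ y ∈ V :=
    fun x y hxy ↦ (hs x y (Quotient.exact hxy)).imp_right And.right
  have hclosed : IsClosedMap (Quotient.mk s) :=
    isClosedMap_of_isCoinducing_of_isDiscrete hquot.isCoinducing hVclosed ⟨hVdiscrete⟩ hfiber
  exact t4Space_of_isClosedMap hclosed hquot.continuous hquot.surjective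
end

section
/- Let X and Y be normal Hausdorff spaces, I an infinite type, and a : I → X, b : I → Y injective maps whose ranges are closed and carry the discrete subspace topology. On the topological sum X ⊕ Y let s be the equivalence relation whose nontrivial classes are exactly the pairs {Sum.inl (a i), Sum.inr (b i)} for i ∈ I, and let q : X ⊕ Y → Quotient s be the quotient map. For each ultrafilter U on I, let a_U (respectively b_U) be the unique point of StoneCech (X ⊕ Y) to which the family fun i => stoneCechUnit (Sum.inl (a i)) (respectively fun i => stoneCechUnit (Sum.inr (b i))) converges along U. Then the continuous extension Q : StoneCech (X ⊕ Y) → StoneCech (Quotient s) of stoneCechUnit ∘ q is a surjection satisfying: Q p = Q p' if and only if p = p' or there exists an ultrafilter U on I with p ∈ {a_U, b_U} and p' ∈ {a_U, b_U}. Hence βZ = (βX ⊕ βY)/∼_β where the pairs {a_U, b_U} are identified for all ultrafilters U on I. -/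
open Filter Topology

/-!
The kernel of `βZ → β(Z/s)` is the smallest closed equivalence relation `R` on `βZ` containing
the image of `s`: since `βZ/R` is compact Hausdorff, `Z/s → βZ/R` extends to `β(Z/s)`.
When the classes of `s` are the sets `{c k i | k ∈ K}` for a finite family of maps `c k : I → Z`,
the nontrivial classes of `R` are the sets of their limits along ultrafilters on `I`. This `R` is
closed, being the union of the diagonal and finitely many continuous images of the compact space
`Ultrafilter I`, and transitive, because disjoint closed sets of a normal space `Z` have disjoint
closures in `βZ`, so that limit sets along different ultrafilters are disjoint.
-/

open Set Function

section Topology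

lemma t2Space_of_isClosedMap {W V : Type*} [TopologicalSpace W] [NormalSpace W] [T1Space W]
    [TopologicalSpace V] {f : W → V} (hf : Continuous f) (hclosed : IsClosedMap f)
    (hsurj : Surjective f) : T2Space V := by
  have isClosed_fiber (v : V) : IsClosed (f ⁻¹' {v}) := by
    obtain ⟨w, rfl⟩ := hsurj v
    rw [← image_singleton]
    exact (hclosed _ isClosed_singleton).preimage hf
  refine ⟨fun v v' hne => ?_⟩
  obtain ⟨O, O', hO, hO', hvO, hvO', hdisj⟩ := normal_separation (isClosed_fiber v)
    (isClosed_fiber v') ((disjoint_singleton.2 hne).preimage f)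
  refine ⟨kernImage f O, kernImage f O', isClosedMap_iff_kernImage.1 hclosed hO,
    isClosedMap_iff_kernImage.1 hclosed hO', fun w hw => hvO hw, fun w hw => hvO' hw, ?_⟩
  rw [disjoint_left]
  intro z hz hz'
  obtain ⟨w, rfl⟩ := hsurj z
  exact disjoint_left.1 hdisj (hz rfl) (hz' rfl)

lemma isClosedMap_quotientMk {W : Type*} [TopologicalSpace W] [CompactSpace W] (R : Setoid W)
    (hR : IsClosed {q : W × W | R q.1 q.2}) : IsClosedMap (Quotient.mk R) := by
  intro F hF
  have saturation_eq : Quotient.mk R ⁻¹' (Quotient.mk R '' F) =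
      Prod.snd '' ({q : W × W | R q.1 q.2} ∩ Prod.fst ⁻¹' F) := by
    ext w
    constructor
    · rintro ⟨v, hv, hvw⟩
      exact ⟨(v, w), ⟨Quotient.exact hvw, hv⟩, rfl⟩
    · rintro ⟨⟨v, _⟩, ⟨hvw, hv⟩, rfl⟩
      exact ⟨v, hv, Quotient.sound hvw⟩
  refine isQuotientMap_quotient_mk'.isClosed_preimage.1 ?_
  exact saturation_eq ▸
    isClosedMap_snd_of_compactSpace _ (hR.inter (hF.preimage continuous_fst))

lemma t2Space_quotient_of_isClosed {W : Type*} [TopologicalSpace W] [CompactSpace W] [T2Space W]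
    (R : Setoid W) (hR : IsClosed {q : W × W | R q.1 q.2}) : T2Space (Quotient R) :=
  t2Space_of_isClosedMap continuous_quotient_mk' (isClosedMap_quotientMk R hR)
    Quotient.mk_surjective

instance normalSpace_sum {X Y : Type*} [TopologicalSpace X] [NormalSpace X] [TopologicalSpace Y]
    [NormalSpace Y] : NormalSpace (X ⊕ Y) := by
  refine ⟨fun F G hF hG hdisj => ?_⟩
  obtain ⟨O, O', hO, hO', hFO, hGO', hOO'⟩ := normal_separation
    (hF.preimage continuous_inl) (hG.preimage continuous_inl) (hdisj.preimage Sum.inl)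
  obtain ⟨V, V', hV, hV', hFV, hGV', hVV'⟩ := normal_separation
    (hF.preimage continuous_inr) (hG.preimage continuous_inr) (hdisj.preimage Sum.inr)
  refine ⟨{z | Sum.elim O V z}, {z | Sum.elim O' V' z}, isOpen_sum_iff.2 ⟨hO, hV⟩,
    isOpen_sum_iff.2 ⟨hO', hV'⟩, ?_, ?_, ?_⟩
  · rintro (x | y) hz
    exacts [hFO hz, hFV hz]
  · rintro (x | y) hz
    exacts [hGO' hz, hGV' hz]
  · rw [disjoint_left]
    rintro (x | y) hz hz'
    exacts [disjoint_left.1 hOO' hz hz', disjoint_left.1 hVV' hz hz']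

lemma isClosed_image_of_discreteTopology_range {X I : Type*} [TopologicalSpace X] {a : I → X}
    (hclosed : IsClosed (range a)) (hdisc : DiscreteTopology (range a)) (S : Set I) :
    IsClosed (a '' S) := by
  have image_eq : a '' S = Subtype.val '' (rangeFactorization a '' S) := by
    rw [image_image]
    rfl
  exact image_eq ▸ hclosed.isClosedEmbedding_subtypeVal.isClosedMap _ (isClosed_discrete _)

end Topology

section DisjointFamily

/-- The equivalence relation whose nontrivial classes are members of the pairwise disjoint
family `C`. The union of the `C i` need not be everything: all other points are singleton
classes. -/
def disjointFamilySetoid {W ι : Type*} (C : ι → Set W) (hC : Pairwise (Disjoint on C)) :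
    Setoid W where
  r p p' := p = p' ∨ ∃ i, p ∈ C i ∧ p' ∈ C i
  iseqv := by
    refine ⟨fun _ => Or.inl rfl, ?_, ?_⟩
    · rintro p p' (h | ⟨i, hp, hp'⟩)
      exacts [Or.inl h.symm, Or.inr ⟨i, hp', hp⟩]
    · rintro p p' p'' (rfl | ⟨i, hp, hp'⟩) (rfl | ⟨j, hp₂, hp''⟩)
      · exact Or.inl rfl
      · exact Or.inr ⟨j, hp₂, hp''⟩
      · exact Or.inr ⟨i, hp, hp'⟩
      · obtain rfl : i = j := hC.eq (not_disjoint_iff.2 ⟨p', hp', hp₂⟩)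
        exact Or.inr ⟨i, hp, hp''⟩

lemma isClosed_disjointFamilySetoid_range {W J K : Type*} [TopologicalSpace W] [T2Space W]
    [TopologicalSpace J] [CompactSpace J] [Finite K] {L : K → J → W} (hL : ∀ k, Continuous (L k))
    (hdisj : Pairwise (Disjoint on fun j => range fun k => L k j)) :
    IsClosed {q : W × W | disjointFamilySetoid _ hdisj q.1 q.2} := by
  have graph_eq : {q : W × W | disjointFamilySetoid _ hdisj q.1 q.2} =
      diagonal W ∪ ⋃ k, ⋃ l, range fun j => (L k j, L l j) := by
    ext ⟨p, p'⟩
    simp only [mem_union, mem_iUnion, mem_range, Prod.mk.injEq, mem_diagonal_iff]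
    refine or_congr_right ⟨?_, ?_⟩
    · rintro ⟨j, ⟨k, hk⟩, l, hl⟩
      exact ⟨k, l, j, hk, hl⟩
    · rintro ⟨k, l, j, hk, hl⟩
      exact ⟨j, ⟨k, hk⟩, l, hl⟩
  rw [graph_eq]
  exact isClosed_diagonal.union <| isClosed_iUnion_of_finite fun k =>
    isClosed_iUnion_of_finite fun l => (isCompact_range ((hL k).prodMk (hL l))).isClosed

end DisjointFamily

section StoneCechQuotient

variable {Z : Type*} [TopologicalSpace Z]

/-- The map `βZ → β(Z/s)` induced by the quotient map `Z → Z/s`. -/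
noncomputable def stoneCechQuotientMap (s : Setoid Z) : StoneCech Z → StoneCech (Quotient s) :=
  stoneCechExtend (continuous_stoneCechUnit.comp continuous_quotient_mk' :
    Continuous fun z : Z => stoneCechUnit (Quotient.mk s z))

lemma continuous_stoneCechQuotientMap (s : Setoid Z) : Continuous (stoneCechQuotientMap s) :=
  continuous_stoneCechExtend _

lemma stoneCechQuotientMap_stoneCechUnit (s : Setoid Z) (z : Z) :
    stoneCechQuotientMap s (stoneCechUnit z) = stoneCechUnit (Quotient.mk s z) :=
  stoneCechExtend_stoneCechUnit _ z

lemma surjective_stoneCechQuotientMap (s : Setoid Z) : Surjective (stoneCechQuotientMap s) := by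
  have hcont := continuous_stoneCechQuotientMap s
  have dense_comp : DenseRange (stoneCechQuotientMap s ∘ stoneCechUnit) := by
    have comp_eq : stoneCechQuotientMap s ∘ stoneCechUnit = stoneCechUnit ∘ Quotient.mk s :=
      funext (stoneCechQuotientMap_stoneCechUnit s)
    rw [comp_eq]
    exact denseRange_stoneCechUnit.comp Quotient.mk_surjective.denseRange continuous_stoneCechUnit
  have dense_range : DenseRange (stoneCechQuotientMap s) :=
    dense_comp.mono (range_comp_subset_range _ _)
  rw [← range_eq_univ, ← (isCompact_range hcont).isClosed.closure_eq, dense_range.closure_range]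

lemma rel_of_stoneCechQuotientMap_eq {s : Setoid Z} {R : Setoid (StoneCech Z)}
    (hR : IsClosed {q : StoneCech Z × StoneCech Z | R q.1 q.2}) (hsR : s ≤ R.comap stoneCechUnit)
    {p p' : StoneCech Z} (h : stoneCechQuotientMap s p = stoneCechQuotientMap s p') : R p p' := by
  have : T2Space (Quotient R) := t2Space_quotient_of_isClosed R hR
  have continuous_mk : Continuous (Quotient.mk R) := continuous_quotient_mk'
  let g : Quotient s → Quotient R :=
    Quotient.lift (fun z => Quotient.mk R (stoneCechUnit z))
      fun _ _ hzz' => Quotient.sound (hsR hzz')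
  have hg : Continuous g := (continuous_mk.comp continuous_stoneCechUnit).quotient_lift _
  have factorization : stoneCechExtend hg ∘ stoneCechQuotientMap s = Quotient.mk R := by
    refine stoneCech_hom_ext
      ((continuous_stoneCechExtend hg).comp (continuous_stoneCechQuotientMap s)) continuous_mk ?_
    funext z
    simp only [comp_apply, stoneCechQuotientMap_stoneCechUnit, stoneCechExtend_stoneCechUnit]
    rfl
  apply Quotient.exact
  rw [← factorization, comp_apply, comp_apply, h]

end StoneCechQuotient

section Ultralimits

variable {Z I K : Type*} [TopologicalSpace Z]

lemma disjoint_closure_stoneCechUnit_image [NormalSpace Z] {F G : Set Z} (hF : IsClosed F)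
    (hG : IsClosed G) (hFG : Disjoint F G) :
    Disjoint (closure (stoneCechUnit '' F)) (closure (stoneCechUnit '' G)) := by
  obtain ⟨f, hf0, hf1, hf⟩ := exists_continuous_zero_one_of_isClosed hF hG hFG
  have hφ : Continuous fun z => (⟨f z, hf z⟩ : unitInterval) := f.continuous.subtype_mk _
  have closure_subset_fiber {H : Set Z} {t : unitInterval} (hH : ∀ z ∈ H, f z = t) :
      closure (stoneCechUnit '' H) ⊆ stoneCechExtend hφ ⁻¹' {t} := by
    refine closure_minimal ?_ (isClosed_singleton.preimage (continuous_stoneCechExtend hφ))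
    rintro _ ⟨z, hz, rfl⟩
    exact (stoneCechExtend_stoneCechUnit hφ z).trans (Subtype.ext (hH z hz))
  exact ((disjoint_singleton.2 zero_ne_one).preimage (stoneCechExtend hφ)).mono
    (closure_subset_fiber (t := 0) hf0) (closure_subset_fiber (t := 1) hf1)

lemma tendsto_ultrafilterExtend {W : Type*} [TopologicalSpace W] [CompactSpace W] [T2Space W]
    (f : I → W) (U : Ultrafilter I) : Tendsto f U (𝓝 (Ultrafilter.extend f U)) :=
  ultrafilter_extend_eq_iff.1 rfl

/-- The set of limits in `βZ`, along the ultrafilter `U`, of the maps `c k : I → Z`.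
`Ultrafilter.extend f U` is the limit of `f` along `U`. -/
def stoneCechLimitSet (c : K → I → Z) (U : Ultrafilter I) : Set (StoneCech Z) :=
  range fun k => Ultrafilter.extend (stoneCechUnit ∘ c k) U

lemma stoneCechLimitSet_subset_closure (c : K → I → Z) {U : Ultrafilter I} {S : Set I}
    (hS : S ∈ U) : stoneCechLimitSet c U ⊆ closure (stoneCechUnit '' ⋃ k, c k '' S) := by
  rintro _ ⟨k, rfl⟩
  refine mem_closure_of_tendsto (tendsto_ultrafilterExtend _ U) ?_
  filter_upwards [hS] with i hi
  exact mem_image_of_mem _ (mem_iUnion.2 ⟨k, mem_image_of_mem _ hi⟩)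

lemma pairwise_disjoint_stoneCechLimitSet [NormalSpace Z] [Finite K] {c : K → I → Z}
    (hclosed : ∀ k S, IsClosed (c k '' S))
    (hdisj : Pairwise (Disjoint on fun i => range fun k => c k i)) :
    Pairwise (Disjoint on stoneCechLimitSet c) := by
  intro U V hUV
  obtain ⟨S, hSU, hSV⟩ : ∃ S ∈ U, Sᶜ ∈ V := by
    by_contra! h
    exact hUV (Ultrafilter.coe_le_coe.1 fun S hS => by_contra fun hSU =>
      h _ (Ultrafilter.compl_mem_iff_notMem.2 hSU) ((compl_compl S).symm ▸ hS))
  have isClosed_block (T : Set I) : IsClosed (⋃ k, c k '' T) :=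
    isClosed_iUnion_of_finite fun k => hclosed k T
  have disjoint_blocks : Disjoint (⋃ k, c k '' S) (⋃ k, c k '' Sᶜ) := by
    simp only [disjoint_iUnion_left, disjoint_iUnion_right]
    intro k l
    rw [disjoint_left]
    rintro _ ⟨i, hi, rfl⟩ ⟨j, hj, hji⟩
    exact disjoint_left.1 (hdisj (ne_of_mem_of_not_mem hi hj)) ⟨l, rfl⟩ ⟨k, hji⟩
  exact (disjoint_closure_stoneCechUnit_image (isClosed_block S) (isClosed_block Sᶜ)
    disjoint_blocks).mono (stoneCechLimitSet_subset_closure c hSU)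
      (stoneCechLimitSet_subset_closure c hSV)

lemma stoneCechQuotientMap_eq_of_mem_stoneCechLimitSet {s : Setoid Z} {c : K → I → Z}
    (hs : ∀ k l i, s (c k i) (c l i)) {U : Ultrafilter I} {p p' : StoneCech Z}
    (hp : p ∈ stoneCechLimitSet c U) (hp' : p' ∈ stoneCechLimitSet c U) :
    stoneCechQuotientMap s p = stoneCechQuotientMap s p' := by
  obtain ⟨k, rfl⟩ := hp
  obtain ⟨l, rfl⟩ := hp'
  have tendsto_comp (m : K) := ((continuous_stoneCechQuotientMap s).tendsto _).comp
    (tendsto_ultrafilterExtend (stoneCechUnit ∘ c m) U)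
  refine tendsto_nhds_unique (tendsto_comp k) ((tendsto_comp l).congr fun i => ?_)
  simp only [comp_apply, stoneCechQuotientMap_stoneCechUnit]
  exact congrArg stoneCechUnit (Quotient.sound (hs l k i))

theorem stoneCech_quotient_glue_two_spaces_general [NormalSpace Z] [Finite K] (c : K → I → Z)
    (hclosed : ∀ k S, IsClosed (c k '' S))
    (hdisj : Pairwise (Disjoint on fun i => range fun k => c k i)) (s : Setoid Z)
    (hs : ∀ z z', s z z' ↔ z = z' ∨ ∃ i, z ∈ range (fun k => c k i) ∧ z' ∈ range fun k => c k i) :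
    Surjective (stoneCechQuotientMap s) ∧ ∀ p p',
      stoneCechQuotientMap s p = stoneCechQuotientMap s p' ↔
        p = p' ∨ ∃ U, p ∈ stoneCechLimitSet c U ∧ p' ∈ stoneCechLimitSet c U := by
  refine ⟨surjective_stoneCechQuotientMap s, fun p p' => ⟨?_, ?_⟩⟩
  · have limitSets_disjoint := pairwise_disjoint_stoneCechLimitSet hclosed hdisj
    refine rel_of_stoneCechQuotientMap_eq (R := disjointFamilySetoid _ limitSets_disjoint)
      (isClosed_disjointFamilySetoid_range (fun _ => continuous_ultrafilter_extend _)
        limitSets_disjoint) fun z z' hzz' => ?_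
    obtain rfl | ⟨i, ⟨k, rfl⟩, l, rfl⟩ := (hs z z').1 hzz'
    · exact Or.inl rfl
    · exact Or.inr ⟨pure i, ⟨k, ultrafilter_extend_pure _ i⟩, l, ultrafilter_extend_pure _ i⟩
  · rintro (rfl | ⟨U, hp, hp'⟩)
    · rfl
    · exact stoneCechQuotientMap_eq_of_mem_stoneCechLimitSet
        (fun k l i => (hs _ _).2 (Or.inr ⟨i, ⟨k, rfl⟩, l, rfl⟩)) hp hp'

end Ultralimits

/-- Corollary 4.11: let `X`, `Y` be normal Hausdorff spaces and `a : I → X`, `b : I → Y`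
injective maps (over an infinite index type) with closed discrete ranges. Let `s` identify
`Sum.inl (a i)` with `Sum.inr (b i)` on `X ⊕ Y`, and for each ultrafilter `U` on `I` let
`a_U = A U` and `b_U = B U` be the `U`-limits in `β(X ⊕ Y)` of the two families. Then the
Stone-Čech extension `Q : β(X ⊕ Y) → β((X ⊕ Y)/s)` of the quotient map is a surjection whose
nontrivial fibres identify exactly the pairs `{a_U, b_U}`; hence
`βZ = (βX ⊕ βY)/∼_β` with `a_U ∼_β b_U` for all ultrafilters `U` on `I`. -/
theorem stoneCech_quotient_glue_two_spaces
    {X Y : Type*} [TopologicalSpace X] [T4Space X] [TopologicalSpace Y] [T4Space Y]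
    {I : Type*} [Infinite I]
    (a : I → X) (b : I → Y)
    (ha : Function.Injective a) (hb : Function.Injective b)
    (haclosed : IsClosed (Set.range a)) (hbclosed : IsClosed (Set.range b))
    (hadisc : DiscreteTopology (Set.range a)) (hbdisc : DiscreteTopology (Set.range b))
    (s : Setoid (X ⊕ Y))
    (hs : ∀ p p' : X ⊕ Y, s.r p p' ↔ p = p' ∨ ∃ i : I,
      (p = Sum.inl (a i) ∧ p' = Sum.inr (b i)) ∨ (p = Sum.inr (b i) ∧ p' = Sum.inl (a i)))
    (A B : Ultrafilter I → StoneCech (X ⊕ Y))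
    (hA : ∀ U : Ultrafilter I,
      Filter.Tendsto (fun i : I => stoneCechUnit (Sum.inl (a i) : X ⊕ Y)) ↑U (𝓝 (A U)))
    (hB : ∀ U : Ultrafilter I,
      Filter.Tendsto (fun i : I => stoneCechUnit (Sum.inr (b i) : X ⊕ Y)) ↑U (𝓝 (B U))) :
    Function.Surjective
        (stoneCechExtend (continuous_stoneCechUnit.comp continuous_quotient_mk' :
          Continuous fun p : X ⊕ Y => stoneCechUnit (Quotient.mk s p))) ∧
      ∀ p p' : StoneCech (X ⊕ Y),
        stoneCechExtend (continuous_stoneCechUnit.comp continuous_quotient_mk' :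
            Continuous fun p : X ⊕ Y => stoneCechUnit (Quotient.mk s p)) p =
          stoneCechExtend (continuous_stoneCechUnit.comp continuous_quotient_mk' :
            Continuous fun p : X ⊕ Y => stoneCechUnit (Quotient.mk s p)) p' ↔
        p = p' ∨ ∃ U : Ultrafilter I,
          p ∈ ({A U, B U} : Set (StoneCech (X ⊕ Y))) ∧
          p' ∈ ({A U, B U} : Set (StoneCech (X ⊕ Y))) := by
  obtain rfl : A = Ultrafilter.extend _ := funext fun U => (ultrafilter_extend_eq_iff.2 (hA U)).symm
  obtain rfl : B = Ultrafilter.extend _ := funext fun U => (ultrafilter_extend_eq_iff.2 (hB U)).symm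
  let c (k : Bool) (i : I) : X ⊕ Y := cond k (Sum.inr (b i)) (Sum.inl (a i))
  have range_c (i : I) : range (fun k => c k i) = {Sum.inl (a i), Sum.inr (b i)} :=
    Bool.range_eq _
  have limitSet_c (U : Ultrafilter I) : stoneCechLimitSet c U = {_, _} := Bool.range_eq _
  have hclosed (k : Bool) (S : Set I) : IsClosed (c k '' S) := by
    cases k
    · exact image_image Sum.inl a S ▸ IsClosedEmbedding.inl.isClosedMap _
        (isClosed_image_of_discreteTopology_range haclosed hadisc S)
    · exact image_image Sum.inr b S ▸ IsClosedEmbedding.inr.isClosedMap _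
        (isClosed_image_of_discreteTopology_range hbclosed hbdisc S)
  have hdisj : Pairwise (Disjoint on fun i => range fun k => c k i) := by
    intro i j hij
    simp [onFun, range_c, ha.ne hij.symm, hb.ne hij.symm]
  have hs_c (z z' : X ⊕ Y) : s z z' ↔
      z = z' ∨ ∃ i, z ∈ range (fun k => c k i) ∧ z' ∈ range fun k => c k i := by
    simp only [range_c, mem_insert_iff, mem_singleton_iff]
    exact (hs z z').trans (by grind)
  have h := stoneCech_quotient_glue_two_spaces_general c hclosed hdisj s hs_c
  simp only [limitSet_c] at h
  exact h
end

section
/- The Stone-Čech remainder of the half-line is connected: the set (Set.range (stoneCechUnit : ℝ≥0 → StoneCech ℝ≥0))ᶜ is a nonempty connected subset of StoneCech ℝ≥0 (i.e. IsConnected holds for it), where ℝ≥0 denotes the nonnegative reals with their usual topology. -/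
open scoped NNReal

/-!
A point of a compactification `e : X → Y` of a locally compact space lies in the remainder exactly
when it is a cluster point of the images of the neighbourhoods of infinity, i.e. of the filter
`map e (cocompact X)`. By compactness, an open set containing all cluster points of a filter
belongs to that filter. So if two disjoint open sets `U` and `V` cover the remainder, some
neighbourhood of infinity is mapped into `U ∪ V`; when it can be chosen connected, it goes into one
of the two sets, and then all cluster points avoid the other. For the half-line, the rays `[a, ∞)`
are connected neighbourhoods of infinity.
-/

open Filter Set Topology

section ClusterPoints

variable {ι Y : Type*} [TopologicalSpace Y] {F : Filter Y} {p : ι → Prop} {s : ι → Set Y}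

theorem notMem_of_clusterPt_of_disjoint {y : Y} {U V : Set Y} (hy : ClusterPt y F) (hU : U ∈ F)
    (hV : IsOpen V) (hUV : Disjoint U V) : y ∉ V :=
  disjoint_left.1 (hUV.closure_left hV) (hy.mem_closure_of_mem _ hU)

theorem isPreconnected_setOfPred_clusterPt [CompactSpace Y] [NormalSpace Y] (hF : F.HasBasis p s)
    (hs : ∀ i, p i → IsPreconnected (s i)) : IsPreconnected {y | ClusterPt y F} := by
  rw [isPreconnected_iff_subset_of_fully_disjoint_closed isClosed_setOfPred_clusterPt]
  intro A B hA hB hAB hdisj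
  obtain ⟨U, V, hU, hV, hAU, hBV, hUV⟩ := normal_separation hA hB hdisj
  have hUVF : U ∪ V ∈ F := isCompact_univ.adherence_nhdset (by simp) (hU.union hV)
    fun y _ hy ↦ union_subset_union hAU hBV (hAB hy)
  obtain ⟨i, hi, hiUV⟩ := hF.mem_iff.1 hUVF
  have hiF : s i ∈ F := hF.mem_of_mem hi
  rcases isPreconnected_iff_subset_of_disjoint.1 (hs i hi) U V hU hV hiUV
    (by rw [hUV.inter_eq, inter_empty]) with hiU | hiV
  · have hUF : U ∈ F := mem_of_superset hiF hiU
    exact .inl fun y hy ↦ (hAB hy).resolve_right fun hyB ↦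
      notMem_of_clusterPt_of_disjoint hy hUF hV hUV (hBV hyB)
  · have hVF : V ∈ F := mem_of_superset hiF hiV
    exact .inr fun y hy ↦ (hAB hy).resolve_left fun hyA ↦
      notMem_of_clusterPt_of_disjoint hy hVF hU hUV.symm (hAU hyA)

theorem isConnected_setOfPred_clusterPt [CompactSpace Y] [NormalSpace Y] [NeBot F]
    (hF : F.HasBasis p s) (hs : ∀ i, p i → IsPreconnected (s i)) :
    IsConnected {y | ClusterPt y F} :=
  ⟨exists_clusterPt_of_compactSpace F, isPreconnected_setOfPred_clusterPt hF hs⟩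

end ClusterPoints

section Remainder

variable {X Y : Type*} [TopologicalSpace X] [TopologicalSpace Y] [T2Space Y] {e : X → Y}

theorem comap_nhds_le_cocompact_of_notMem_range (he : Continuous e) {y : Y} (hy : y ∉ range e) :
    comap e (𝓝 y) ≤ cocompact X := by
  refine hasBasis_cocompact.ge_iff.2 fun K hK ↦ ?_
  have hyK : (e '' K)ᶜ ∈ 𝓝 y :=
    (hK.image he).isClosed.compl_mem_nhds fun h ↦ hy (image_subset_range e K h)
  exact mem_of_superset (preimage_mem_comap hyK) fun x hx hxK ↦ hx (mem_image_of_mem e hxK)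

theorem compl_range_eq_setOfPred_mapClusterPt_cocompact [WeaklyLocallyCompactSpace X]
    (he : IsDenseInducing e) : (range e)ᶜ = {y | MapClusterPt y (cocompact X) e} := by
  ext y
  constructor
  · intro hy
    have : NeBot (comap e (𝓝 y)) := he.comap_nhds_neBot y
    exact tendsto_comap.mapClusterPt.mono
      (comap_nhds_le_cocompact_of_notMem_range he.continuous hy)
  · rintro hy ⟨x, rfl⟩
    have hx : ClusterPt x (cocompact X) := he.isInducing.mapClusterPt_iff.1 hy
    exact clusterPt_iff_not_disjoint.1 hx (disjoint_nhds_cocompact x)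

theorem stoneCech_remainder_halfLine_connected_general {ι : Type*} [WeaklyLocallyCompactSpace X]
    [NoncompactSpace X] [CompactSpace Y] (he : IsDenseInducing e) {p : ι → Prop} {s : ι → Set X}
    (hb : (cocompact X).HasBasis p s) (hs : ∀ i, p i → IsPreconnected (s i)) :
    IsConnected (range e)ᶜ := by
  rw [compl_range_eq_setOfPred_mapClusterPt_cocompact he]
  exact isConnected_setOfPred_clusterPt (hb.map e)
    fun i hi ↦ (hs i hi).image e he.continuous.continuousOn

end Remainder

/-- The Stone-Čech remainder of the half-line `ℝ≥0` is nonempty and connected. -/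
theorem stoneCech_remainder_halfLine_connected :
    IsConnected ((Set.range (stoneCechUnit : ℝ≥0 → StoneCech ℝ≥0))ᶜ) := by
  have hb : (cocompact ℝ≥0).HasBasis (fun _ ↦ True) Ici := by
    rw [cocompact_eq_atTop]
    exact atTop_basis
  have : NoncompactSpace ℝ≥0 := cocompact_neBot_iff.1 (hb.neBot_iff.2 fun _ ↦ nonempty_Ici)
  exact stoneCech_remainder_halfLine_connected_general isDenseInducing_stoneCechUnit hb
    fun _ _ ↦ isPreconnected_Ici
end

section
/- Every connected component of the Stone-Čech remainder G* of the 1-complex |G| contains a point of the closure of the vertex set: for every p ∈ G*, the connected component of p in the subspace G* (connectedComponentIn G* p) meets closure (stoneCechUnit '' V̄), where V̄ ⊆ |G| denotes the set of vertex points of the 1-complex. -/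
open SimpleGraph

variable {V : Type*} (G : SimpleGraph V)

/-- The darts of `G` carry the discrete topology. -/
instance : TopologicalSpace G.Dart := ⊥

instance : DiscreteTopology G.Dart := ⟨rfl⟩

/-- The generating relation for the 1-complex: `(d, t) ∼ (d.symm, 1 − t)`, and
`(d, 0) ∼ (d', 0)` whenever `d` and `d'` have the same initial vertex. -/
def oneComplexRel (p q : G.Dart × unitInterval) : Prop :=
  (q.1 = p.1.symm ∧ q.2 = unitInterval.symm p.2) ∨
    (p.2 = 0 ∧ q.2 = 0 ∧ p.1.fst = q.1.fst)

/-- The equivalence relation generated by `oneComplexRel`. -/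
def oneComplexSetoid : Setoid (G.Dart × unitInterval) :=
  Relation.EqvGen.setoid (oneComplexRel G)

/-- The 1-complex `|G|` of the graph `G`. -/
abbrev OneComplex : Type _ :=
  Quotient (oneComplexSetoid G)

/-- The set of vertex points of the 1-complex. -/
def vertexPoints : Set (OneComplex G) :=
  {x | ∃ d : G.Dart, x = Quotient.mk (oneComplexSetoid G) (d, (0 : unitInterval))}

/-- The set of inner edge points of the 1-complex. -/
def innerEdgePoints : Set (OneComplex G) :=
  {x | ∃ (d : G.Dart) (t : unitInterval), 0 < (t : ℝ) ∧ (t : ℝ) < 1 ∧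
    x = Quotient.mk (oneComplexSetoid G) (d, t)}

/-- The Stone-Čech remainder `G*` of the 1-complex `|G|`. -/
def stoneCechRemainder : Set (StoneCech (OneComplex G)) :=
  (Set.range (stoneCechUnit : OneComplex G → StoneCech (OneComplex G)))ᶜ

open Filter Topology unitInterval

/-!
If `p ∈ G*` is not in the closure of the vertices, choose an ultrafilter on pairs `(d, t)` along
which the points of `|G|` converge to `p`. Such points leave every single edge, as an edge is
compact, so after reversing darts the terminal vertices of the `d` leave every vertex. Now push
each point forward along its edge up to the terminal vertex: the ultralimit of the segments so
traversed is connected, contains `p`, and contains a limit of vertices. It avoids `|G|` because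
points tending to `p` keep an edge-dependent positive distance `ε d` from the initial vertices, so
that a function equal to `1` on a given edge and supported in a small neighbourhood of its closed
edge vanishes on almost all of these segments.
-/

section KuratowskiLimsup

variable {ι X : Type*} [TopologicalSpace X] {C : ι → Set X} {s : Set X}

/-- The Kuratowski limit superior of a family of sets `C` along a filter `l`: the points each of
whose neighbourhoods meets `C i` for `l`-frequently many `i`. Along an ultrafilter it is the
ultralimit of the family. -/
def kuratowskiLimsup (l : Filter ι) (C : ι → Set X) : Set X :=
  ⋂ A ∈ l, closure (⋃ i ∈ A, C i)

theorem isClosed_kuratowskiLimsup (l : Filter ι) (C : ι → Set X) :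
    IsClosed (kuratowskiLimsup l C) :=
  isClosed_biInter fun _ _ => isClosed_closure

theorem mem_kuratowskiLimsup_of_tendsto {l : Filter ι} [NeBot l] {f : ι → X} {a : X}
    (hf : Tendsto f l (𝓝 a)) (hC : ∀ᶠ i in l, f i ∈ C i) : a ∈ kuratowskiLimsup l C := by
  refine Set.mem_iInter₂.mpr fun A hA => mem_closure_of_tendsto hf ?_
  filter_upwards [hA, hC] with i hiA hiC
  exact Set.mem_biUnion hiA hiC

theorem kuratowskiLimsup_subset_closure {l : Filter ι} (h : ∀ᶠ i in l, C i ⊆ s) :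
    kuratowskiLimsup l C ⊆ closure s :=
  (Set.biInter_subset_of_mem h).trans (closure_mono (Set.iUnion₂_subset fun _ hi => hi))

theorem disjoint_kuratowskiLimsup {l : Filter ι} {t : Set X} (h : ∀ᶠ i in l, C i ⊆ s)
    (ht : IsOpen t) (hst : Disjoint s t) : Disjoint (kuratowskiLimsup l C) t :=
  (hst.closure_left ht).mono_left (kuratowskiLimsup_subset_closure h)

theorem eventually_subset_of_kuratowskiLimsup_subset [CompactSpace X] {l : Filter ι}
    (hs : IsOpen s) (h : kuratowskiLimsup l C ⊆ s) : ∀ᶠ i in l, C i ⊆ s := by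
  have hdir : Directed (· ⊇ ·) fun A : {A // A ∈ l} => closure (⋃ i ∈ A.1, C i) := fun A B =>
    ⟨⟨A.1 ∩ B.1, inter_mem A.2 B.2⟩,
      closure_mono (Set.biUnion_subset_biUnion_left Set.inter_subset_left),
      closure_mono (Set.biUnion_subset_biUnion_left Set.inter_subset_right)⟩
  have : Nonempty {A // A ∈ l} := ⟨⟨Set.univ, univ_mem⟩⟩
  obtain ⟨A, hA⟩ := exists_subset_nhds_of_compactSpace hdir (fun _ => isClosed_closure)
    fun x hx => hs.mem_nhds (h (Set.mem_iInter₂.mpr fun A hA => Set.mem_iInter.mp hx ⟨A, hA⟩))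
  filter_upwards [A.2] with i hi
  exact (Set.subset_biUnion_of_mem hi).trans (subset_closure.trans hA)

theorem isPreconnected_kuratowskiLimsup [CompactSpace X] [NormalSpace X] (u : Ultrafilter ι)
    (hC : ∀ i, IsPreconnected (C i)) : IsPreconnected (kuratowskiLimsup (u : Filter ι) C) := by
  rw [isPreconnected_iff_subset_of_fully_disjoint_closed (isClosed_kuratowskiLimsup _ _)]
  intro P Q hP hQ hPQ hdisj
  obtain ⟨U, W, hU, hW, hPU, hQW, hUW⟩ := normal_separation hP hQ hdisj
  have hsplit : ∀ᶠ i in (u : Filter ι), C i ⊆ U ∨ C i ⊆ W := by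
    filter_upwards [eventually_subset_of_kuratowskiLimsup_subset (hU.union hW)
      (hPQ.trans (Set.union_subset_union hPU hQW))] with i hi
    exact isPreconnected_iff_subset_of_disjoint.mp (hC i) U W hU hW hi
      (by rw [hUW.inter_eq, Set.inter_empty])
  rcases Ultrafilter.eventually_or.mp hsplit with hCU | hCW
  · have hLQ := (disjoint_kuratowskiLimsup hCU hW hUW).mono_right hQW
    exact .inl (hLQ.subset_left_of_subset_union hPQ)
  · have hLP := (disjoint_kuratowskiLimsup hCW hU hUW.symm).mono_right hPU
    exact .inr (hLP.subset_right_of_subset_union hPQ)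

end KuratowskiLimsup

section StoneCech

variable {X Y : Type*} [TopologicalSpace Y]

theorem exists_ultrafilter_tendsto_of_denseRange {f : X → Y} (hf : DenseRange f) (y : Y) :
    ∃ u : Ultrafilter X, Tendsto f u (𝓝 y) := by
  have : NeBot (comap f (𝓝 y)) :=
    comap_neBot_iff_frequently.mpr (mem_closure_iff_frequently.mp (hf y))
  exact ⟨Ultrafilter.of _, tendsto_comap.mono_left (Ultrafilter.of_le _)⟩

theorem mem_closure_image_of_stoneCechUnit_mem_closure [TopologicalSpace X]
    [CompletelyRegularSpace Y] {f : X → Y} (hf : Continuous f) {x : X} {s : Set X}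
    (hx : stoneCechUnit x ∈ closure (stoneCechUnit '' s)) : f x ∈ closure (f '' s) := by
  have hunit : Continuous (stoneCechUnit ∘ f) := continuous_stoneCechUnit.comp hf
  have hext : ∀ x, stoneCechExtend hunit (stoneCechUnit x) = stoneCechUnit (f x) :=
    congrFun (stoneCechExtend_extends hunit)
  rw [isInducing_stoneCechUnit.closure_eq_preimage_closure_image, Set.mem_preimage, ← hext]
  refine map_mem_closure (continuous_stoneCechExtend hunit) hx ?_
  rintro _ ⟨a, ha, rfl⟩
  exact ⟨f a, ⟨a, ha, rfl⟩, (hext a).symm⟩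

end StoneCech

namespace OneComplex

variable {G}

/-- The point of `|G|` at parameter `t` along the dart `d`, for `x = (d, t)`. -/
def mk (x : G.Dart × I) : OneComplex G :=
  Quotient.mk (oneComplexSetoid G) x

/-- The parametrization of the same point of an edge along the reversed dart. -/
def reverse (x : G.Dart × I) : G.Dart × I :=
  (x.1.symm, σ x.2)

/-- The segment of an edge from the point `mk x` to the terminal vertex of the dart `x.1`. -/
def terminalSegment (x : G.Dart × I) : Set (OneComplex G) :=
  (fun t => mk (x.1, t)) '' Set.Ici x.2

theorem mk_surjective : Function.Surjective (mk : G.Dart × I → OneComplex G) :=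
  Quotient.mk_surjective

theorem continuous_mk : Continuous (mk : G.Dart × I → OneComplex G) :=
  continuous_quotient_mk'

theorem mk_reverse (x : G.Dart × I) : mk (reverse x) = mk x :=
  (Quotient.sound (s := oneComplexSetoid G) (.rel _ _ (.inl ⟨rfl, rfl⟩))).symm

theorem mk_zero_mem_vertexPoints (d : G.Dart) : mk (d, 0) ∈ vertexPoints G :=
  ⟨d, rfl⟩

theorem mk_one_mem_vertexPoints (d : G.Dart) : mk (d, 1) ∈ vertexPoints G := by
  rw [← mk_reverse, reverse, unitInterval.symm_one]
  exact mk_zero_mem_vertexPoints d.symm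

theorem isPreconnected_terminalSegment (x : G.Dart × I) : IsPreconnected (terminalSegment x) :=
  isPreconnected_Ici.image _ (continuous_mk.comp (.prodMk_right x.1)).continuousOn

theorem exists_continuous_lift {Y : Type*} [TopologicalSpace Y] {f : G.Dart × I → Y}
    (hf : Continuous f) (hrev : ∀ x, f (reverse x) = f x)
    (hzero : ∀ d d' : G.Dart, d.fst = d'.fst → f (d, 0) = f (d', 0)) :
    ∃ g : OneComplex G → Y, Continuous g ∧ ∀ x, g (mk x) = f x := by
  have hle : oneComplexSetoid G ≤ Setoid.ker f := by
    refine Setoid.eqvGen_le ?_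
    rintro ⟨d, t⟩ ⟨d', t'⟩ (⟨rfl, rfl⟩ | ⟨rfl, rfl, h⟩)
    · exact (hrev (d, t)).symm
    · exact hzero d d' h
  exact ⟨Quotient.lift f hle, hf.quotient_lift hle, fun _ => rfl⟩

open scoped Classical in
/-- A bump function, pulled back to `G.Dart × I`, equal to `1` on the subgraph induced by `F` and
supported within distance `ε d` of `F` on every dart `d` that leaves `F`. -/
noncomputable def inducedBump (F : Set V) (ε : G.Dart → I) (x : G.Dart × I) : ℝ :=
  if x.1.fst ∈ F then
    if x.1.snd ∈ F then 1 else max 0 (1 - x.2 / ε x.1)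
  else
    if x.1.snd ∈ F then max 0 (1 - σ x.2 / ε x.1.symm) else 0

theorem continuous_inducedBump (F : Set V) (ε : G.Dart → I) : Continuous (inducedBump F ε) := by
  refine continuous_prod_of_discrete_left.mpr fun d => ?_
  unfold inducedBump
  dsimp only
  split_ifs <;> fun_prop

theorem inducedBump_reverse (F : Set V) (ε : G.Dart → I) (x : G.Dart × I) :
    inducedBump F ε (reverse x) = inducedBump F ε x := by
  by_cases hfst : x.1.fst ∈ F <;> by_cases hsnd : x.1.snd ∈ F <;>
    simp [inducedBump, reverse, hfst, hsnd]

theorem inducedBump_of_le {F : Set V} {ε : G.Dart → I} (hε : ∀ d, 0 < ε d) {d : G.Dart} {t : I}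
    (hd : d.snd ∉ F) (ht : ε d ≤ t) : inducedBump F ε (d, t) = 0 := by
  have hdiv : 1 ≤ (t : ℝ) / ε d := (one_le_div (unitInterval.coe_pos.mpr (hε d))).mpr ht
  simp [inducedBump, hd, hdiv]

theorem inducedBump_zero (F : Set V) [DecidablePred (· ∈ F)] {ε : G.Dart → I}
    (hε : ∀ d, 0 < ε d) (d : G.Dart) :
    inducedBump F ε (d, 0) = if d.fst ∈ F then 1 else 0 := by
  have hinv : 1 ≤ (ε d.symm : ℝ)⁻¹ :=
    (one_le_inv₀ (unitInterval.coe_pos.mpr (hε d.symm))).mpr (ε d.symm).2.2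
  by_cases hfst : d.fst ∈ F <;> by_cases hsnd : d.snd ∈ F <;>
    simp [inducedBump, hfst, hsnd, hinv]

theorem exists_continuous_bump (F : Set V) {ε : G.Dart → I} (hε : ∀ d, 0 < ε d) :
    ∃ f : OneComplex G → ℝ, Continuous f ∧
      (∀ d t, d.fst ∈ F → d.snd ∈ F → f (mk (d, t)) = 1) ∧
      ∀ d t, d.snd ∉ F → ε d ≤ t → f (mk (d, t)) = 0 := by
  classical
  obtain ⟨f, hf, hfmk⟩ := exists_continuous_lift (continuous_inducedBump F ε)
    (inducedBump_reverse F ε) fun d d' h => by simp only [inducedBump_zero F hε, h]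
  refine ⟨f, hf, fun d t hfst hsnd => ?_, fun d t hd ht => ?_⟩
  · rw [hfmk, inducedBump, if_pos hfst, if_pos hsnd]
  · rw [hfmk, inducedBump_of_le hε hd ht]

theorem kuratowskiLimsup_terminalSegment_subset_remainder {l : Filter (G.Dart × I)}
    {ε : G.Dart → I} (hε : ∀ d, 0 < ε d) (hle : ∀ᶠ x in l, ε x.1 ≤ x.2)
    (hsnd : ∀ v, ∀ᶠ x in l, x.1.snd ≠ v) :
    kuratowskiLimsup l (fun x => stoneCechUnit '' terminalSegment x) ⊆ stoneCechRemainder G := by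
  rintro _ hz ⟨y, rfl⟩
  obtain ⟨⟨d, t⟩, rfl⟩ := mk_surjective y
  obtain ⟨f, hf, hone, hzero⟩ := exists_continuous_bump {d.fst, d.snd} hε
  have hsub : ∀ᶠ x in l, stoneCechUnit '' terminalSegment x ⊆ stoneCechUnit '' (f ⁻¹' {0}) := by
    filter_upwards [hle, hsnd d.fst, hsnd d.snd] with x hx hxfst hxsnd
    refine Set.image_mono ?_
    rintro _ ⟨s, hs, rfl⟩
    exact hzero _ _ (by simp [hxfst, hxsnd]) (hx.trans hs)
  have hmem : f (mk (d, t)) ∈ closure (f '' (f ⁻¹' {0})) :=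
    mem_closure_image_of_stoneCechUnit_mem_closure hf (kuratowskiLimsup_subset_closure hsub hz)
  have : f (mk (d, t)) = 0 :=
    closure_minimal (Set.image_preimage_subset f {0}) isClosed_singleton hmem
  exact one_ne_zero ((hone d t (by simp) (by simp)).symm.trans this)

theorem exists_pos_forall_lt_mk_mem {W : Set (OneComplex G)} (hW : IsOpen W)
    (hV : vertexPoints G ⊆ W) :
    ∃ ε : G.Dart → I, (∀ d, 0 < ε d) ∧ ∀ d, ∀ t < ε d, mk (d, t) ∈ W := by
  have hnhds : ∀ d : G.Dart, {t : I | mk (d, t) ∈ W} ∈ 𝓝 0 := fun d =>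
    (hW.preimage (continuous_mk.comp (.prodMk_right d))).mem_nhds (hV (mk_zero_mem_vertexPoints d))
  choose ε hε hsub using fun d => nhds_bot_basis.mem_iff.mp (hnhds d)
  exact ⟨ε, hε, fun d _ ht => hsub d ht⟩

theorem exists_pos_eventually_le {p : StoneCech (OneComplex G)}
    (hp : p ∉ closure (stoneCechUnit '' vertexPoints G)) {l : Filter (G.Dart × I)}
    (hl : Tendsto (stoneCechUnit ∘ mk) l (𝓝 p)) :
    ∃ ε : G.Dart → I, (∀ d, 0 < ε d) ∧ ∀ᶠ x in l, ε x.1 ≤ x.2 := by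
  obtain ⟨N, hN, hNclosed, hNV⟩ :=
    exists_mem_nhds_isClosed_subset (isClosed_closure.isOpen_compl.mem_nhds hp)
  obtain ⟨ε, hε, hεN⟩ := exists_pos_forall_lt_mk_mem
    (hNclosed.isOpen_compl.preimage continuous_stoneCechUnit)
    fun v hv hvN => hNV hvN (subset_closure ⟨v, hv, rfl⟩)
  refine ⟨ε, hε, ?_⟩
  filter_upwards [hl hN] with x hxN
  exact not_lt.mp fun hlt => hεN x.1 x.2 hlt hxN

theorem denseRange_stoneCechUnit_comp_mk :
    DenseRange (stoneCechUnit ∘ (mk : G.Dart × I → OneComplex G)) :=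
  denseRange_stoneCechUnit.comp mk_surjective.denseRange continuous_stoneCechUnit

theorem frequently_fst_ne_of_tendsto {p : StoneCech (OneComplex G)}
    (hp : p ∈ stoneCechRemainder G) {l : Filter (G.Dart × I)} [NeBot l]
    (hl : Tendsto (stoneCechUnit ∘ mk) l (𝓝 p)) (d : G.Dart) : ∃ᶠ x in l, x.1 ≠ d := by
  intro hd
  have hK : IsCompact (Set.range fun t => stoneCechUnit (mk (d, t))) :=
    isCompact_range <| continuous_stoneCechUnit.comp <| continuous_mk.comp <| .prodMk_right d
  obtain ⟨t, ht⟩ : p ∈ Set.range fun t => stoneCechUnit (mk (d, t)) := by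
    refine hK.isClosed.mem_of_tendsto hl ?_
    filter_upwards [hd] with x hx
    exact ⟨x.2, by rw [← not_not.mp hx]; rfl⟩
  exact hp ⟨mk (d, t), ht⟩

theorem exists_ultrafilter_tendsto_forall_eventually_snd_ne {p : StoneCech (OneComplex G)}
    (hp : p ∈ stoneCechRemainder G) :
    ∃ u : Ultrafilter (G.Dart × I), Tendsto (stoneCechUnit ∘ mk) u (𝓝 p) ∧
      ∀ v, ∀ᶠ x in (u : Filter (G.Dart × I)), x.1.snd ≠ v := by
  obtain ⟨u, hu⟩ := exists_ultrafilter_tendsto_of_denseRange denseRange_stoneCechUnit_comp_mk p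
  by_cases hsnd : ∀ v, ∀ᶠ x in (u : Filter (G.Dart × I)), x.1.snd ≠ v
  · exact ⟨u, hu, hsnd⟩
  obtain ⟨v, hv⟩ := not_forall.mp hsnd
  refine ⟨u.map reverse, ?_, fun w => ?_⟩
  · rw [Ultrafilter.coe_map, tendsto_map'_iff]
    exact hu.congr fun x => congrArg stoneCechUnit (mk_reverse x).symm
  · change ∀ᶠ x in (u : Filter (G.Dart × I)), x.1.fst ≠ w
    by_contra hw
    have hends : ∀ᶠ x in (u : Filter (G.Dart × I)), x.1.fst = w ∧ x.1.snd = v := by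
      simpa using (Ultrafilter.eventually_not.mpr hw).and (Ultrafilter.eventually_not.mpr hv)
    obtain ⟨y, hyw, hyv⟩ := hends.exists
    refine frequently_fst_ne_of_tendsto hp hu y.1 (hends.mono fun x hx => not_not.mpr ?_)
    exact Dart.ext _ _ (Prod.ext (hx.1.trans hyw.symm) (hx.2.trans hyv.symm))

end OneComplex

open OneComplex in
theorem connectedComponentIn_remainder_meets_vertexClosure_general
    (p : StoneCech (OneComplex G)) (hp : p ∈ stoneCechRemainder G) :
    (connectedComponentIn (stoneCechRemainder G) p ∩
      closure (stoneCechUnit '' vertexPoints G)).Nonempty := by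
  by_cases hpV : p ∈ closure (stoneCechUnit '' vertexPoints G)
  · exact ⟨p, mem_connectedComponentIn hp, hpV⟩
  obtain ⟨u, hu, hsnd⟩ := exists_ultrafilter_tendsto_forall_eventually_snd_ne hp
  obtain ⟨ε, hε, hle⟩ := exists_pos_eventually_le hpV hu
  let endpoint (x : G.Dart × I) : StoneCech (OneComplex G) := stoneCechUnit (mk (x.1, 1))
  let q := (u.map endpoint).lim
  have hq : Tendsto endpoint u (𝓝 q) := (u.map endpoint).le_nhds_lim
  let L := kuratowskiLimsup (u : Filter (G.Dart × I)) fun x => stoneCechUnit '' terminalSegment x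
  have hL : IsPreconnected L := isPreconnected_kuratowskiLimsup u fun x =>
    (isPreconnected_terminalSegment x).image _ continuous_stoneCechUnit.continuousOn
  have hpL : p ∈ L := mem_kuratowskiLimsup_of_tendsto hu
    (.of_forall fun x => Set.mem_image_of_mem _ ⟨x.2, Set.self_mem_Ici, rfl⟩)
  have hqL : q ∈ L := mem_kuratowskiLimsup_of_tendsto hq
    (.of_forall fun x => Set.mem_image_of_mem _ ⟨1, unitInterval.le_one x.2, rfl⟩)
  have hLsub : L ⊆ stoneCechRemainder G :=
    kuratowskiLimsup_terminalSegment_subset_remainder hε hle hsnd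
  have hqV : q ∈ closure (stoneCechUnit '' vertexPoints G) := mem_closure_of_tendsto hq
    (.of_forall fun x => Set.mem_image_of_mem _ (mk_one_mem_vertexPoints x.1))
  exact ⟨q, hL.subset_connectedComponentIn hpL hLsub hqL, hqV⟩

/-- Every connected component of the Stone-Čech remainder `G*` of the 1-complex `|G|`
meets the closure of the vertex set. -/
theorem connectedComponentIn_remainder_meets_vertexClosure
    [Infinite V] (hG : G.Connected)
    (p : StoneCech (OneComplex G)) (hp : p ∈ stoneCechRemainder G) :
    (connectedComponentIn (stoneCechRemainder G) p ∩
      closure (stoneCechUnit '' vertexPoints G)).Nonempty :=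
  connectedComponentIn_remainder_meets_vertexClosure_general G p hp
end

section
/- Let G be a connected simple graph on an infinite vertex set V having at least one vertex of infinite degree (so G is not locally finite). Then no Hausdorff compactification of the 1-complex |G| has a totally disconnected remainder: for every compact Hausdorff space K and every topological embedding e : |G| → K with dense range, the remainder (Set.range e)ᶜ is not totally disconnected, i.e. it contains a connected subset with at least two points. -/
open SimpleGraph

variable {V : Type*} (G : SimpleGraph V)

/-!
For a finite set `F` of vertices let `T F` be the union of the edges from `v` to its neighbours
outside `F`. The sets `T F` are connected and shrink to the vertex point of `v`, but none of them
lies in the open star of `v`. In the compactification `K`, the intersection of the closures of the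
`T F` is therefore a continuum with at least two points whose only point in `|G|` is the image of
`v`. Removing one point from a nondegenerate continuum never leaves a totally disconnected set:
otherwise what remains would have a compact open subset, which would be clopen in the continuum.
-/

open Set Topology

section Continua

variable {X Y ι : Type*} [TopologicalSpace X] [TopologicalSpace Y]

theorem isPreconnected_iInter_of_directed [T2Space X] [Nonempty ι] {T : ι → Set X}
    (hdir : Directed (· ⊇ ·) T) (hcomp : ∀ i, IsCompact (T i))
    (hconn : ∀ i, IsPreconnected (T i)) : IsPreconnected (⋂ i, T i) := by
  have hL : IsCompact (⋂ i, T i) :=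
    let ⟨i⟩ := ‹Nonempty ι›
    (hcomp i).of_isClosed_subset (isClosed_iInter fun j => (hcomp j).isClosed) (iInter_subset T i)
  rw [isPreconnected_iff_subset_of_fully_disjoint_closed hL.isClosed]
  intro u v hu hv huv hdisj
  obtain ⟨O₁, O₂, hO₁, hO₂, hu₁, hv₂, hO⟩ :=
    SeparatedNhds.of_isCompact_isCompact (hL.inter_right hu) (hL.inter_right hv)
      (hdisj.mono inter_subset_right inter_subset_right)
  have hLO : ⋂ i, T i ⊆ O₁ ∪ O₂ := fun x hx =>
    (huv hx).imp (fun h => hu₁ ⟨hx, h⟩) (fun h => hv₂ ⟨hx, h⟩)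
  obtain ⟨i, hi⟩ := exists_subset_nhds_of_isCompact hdir hcomp
    fun x hx => (hO₁.union hO₂).mem_nhds (hLO hx)
  refine ((hconn i).subset_or_subset hO₁ hO₂ hO hi).imp (fun h x hx => ?_) (fun h x hx => ?_)
  · exact (huv hx).resolve_right fun hxv =>
      hO.notMem_of_mem_left (h (mem_iInter.1 hx i)) (hv₂ ⟨hx, hxv⟩)
  · exact (huv hx).resolve_left fun hxu =>
      hO.notMem_of_mem_left (hu₁ ⟨hx, hxu⟩) (h (mem_iInter.1 hx i))

theorem not_isTotallyDisconnected_of_isOpen [T2Space X] [LocallyCompactSpace X]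
    [PreconnectedSpace X] {U : Set X} (hU : IsOpen U) (hne : U.Nonempty) (hne' : U ≠ univ) :
    ¬IsTotallyDisconnected U := by
  intro htd
  have : TotallyDisconnectedSpace U := totallyDisconnectedSpace_subtype_iff.2 htd
  have : LocallyCompactSpace U := hU.locallyCompactSpace
  obtain ⟨x, hx⟩ := hne
  obtain ⟨C, hC, hxC⟩ := exists_compact_mem_nhds (⟨x, hx⟩ : U)
  obtain ⟨D, hD, hxD, hDC⟩ := loc_compact_Haus_tot_disc_of_zero_dim.mem_nhds_iff.1 hxC
  have hclopen : IsClopen (Subtype.val '' D : Set X) :=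
    ⟨((hC.of_isClosed_subset hD.isClosed hDC).image continuous_subtype_val).isClosed,
      hU.isOpenMap_subtype_val D hD.isOpen⟩
  have huniv : (Subtype.val '' D : Set X) = univ := hclopen.eq_univ ⟨x, mem_image_of_mem _ hxD⟩
  exact hne' (univ_subset_iff.1 (huniv ▸ Subtype.coe_image_subset U D))

theorem not_isTotallyDisconnected_sdiff_singleton [T2Space X] {L : Set X} (hcomp : IsCompact L)
    (hconn : IsPreconnected L) (hnt : L.Nontrivial) {x : X} (hx : x ∈ L) :
    ¬IsTotallyDisconnected (L \ {x}) := by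
  have : CompactSpace L := isCompact_iff_compactSpace.1 hcomp
  have : PreconnectedSpace L := isPreconnected_iff_preconnectedSpace.1 hconn
  obtain ⟨y, hy, hyx⟩ := hnt.exists_ne x
  have himage : Subtype.val '' ({⟨x, hx⟩}ᶜ : Set L) = L \ {x} := by
    rw [image_compl_eq_range_sdiff_image Subtype.val_injective, Subtype.range_coe, image_singleton]
  rw [← himage, IsEmbedding.subtypeVal.isTotallyDisconnected_image]
  exact not_isTotallyDisconnected_of_isOpen isOpen_compl_singleton
    ⟨⟨y, hy⟩, fun h => hyx (congrArg Subtype.val h)⟩ (compl_ne_univ.2 (singleton_nonempty _))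

theorem nontrivial_iInter_closure_of_directed [CompactSpace X] [Nonempty ι] {S : ι → Set X}
    (hdir : Directed (· ⊇ ·) S) {x : X} (hx : x ∈ ⋂ i, closure (S i)) {W : Set X} (hW : W ∈ 𝓝 x)
    (hSW : ∀ i, ¬S i ⊆ W) : (⋂ i, closure (S i)).Nontrivial := by
  obtain ⟨p, hp⟩ : (⋂ i, closure (S i \ W)).Nonempty :=
    IsCompact.nonempty_iInter_of_directed_nonempty_isCompact_isClosed _
      (hdir.mono_comp (· ⊇ ·) (g := fun s => closure (s \ W)) fun _ _ h =>
        closure_mono (sdiff_subset_sdiff_left h))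
      (fun i => (sdiff_nonempty.2 (hSW i)).closure)
      (fun _ => isClosed_closure.isCompact) (fun _ => isClosed_closure)
  rw [mem_iInter] at hp
  refine ⟨p, mem_iInter.2 fun i => closure_mono sdiff_subset (hp i), x, hx, ?_⟩
  rintro rfl
  obtain ⟨i⟩ := ‹Nonempty ι›
  obtain ⟨y, hyW, hy⟩ := mem_closure_iff_nhds.1 (hp i) W hW
  exact hy.2 hyW

theorem not_isTotallyDisconnected_compl_range_of_directed [T2Space Y] [CompactSpace Y] [Nonempty ι]
    {e : X → Y} (he : IsInducing e) {T : ι → Set X} (hdir : Directed (· ⊇ ·) T)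
    (hconn : ∀ i, IsPreconnected (T i)) {x : X} (hT : ⋂ i, closure (T i) = {x})
    {U : Set X} (hU : U ∈ 𝓝 x) (hTU : ∀ i, ¬T i ⊆ U) : ¬IsTotallyDisconnected (range e)ᶜ := by
  set L : Set Y := ⋂ i, closure (e '' T i)
  have hL (y : X) : e y ∈ L ↔ y = x := by
    rw [← mem_singleton_iff, ← hT]
    simp only [L, mem_iInter, he.closure_eq_preimage_closure_image, mem_preimage]
  have hxL : e x ∈ L := (hL x).2 rfl
  have hLcomp : IsCompact L := (isClosed_iInter fun _ => isClosed_closure).isCompact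
  have hLconn : IsPreconnected L := isPreconnected_iInter_of_directed
    (hdir.mono_comp (· ⊇ ·) (g := fun s => closure (e '' s)) fun _ _ h =>
      closure_mono (image_mono h))
    (fun _ => isClosed_closure.isCompact)
    (fun i => ((hconn i).image e he.continuous.continuousOn).closure)
  obtain ⟨W, hW, hWU⟩ : ∃ W ∈ 𝓝 (e x), e ⁻¹' W ⊆ U := by
    rwa [he.nhds_eq_comap, Filter.mem_comap] at hU
  have hLnt : L.Nontrivial := nontrivial_iInter_closure_of_directed
    (hdir.mono_comp (· ⊇ ·) (g := (e '' ·)) fun _ _ h => image_mono h) hxL hW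
    fun i h => hTU i ((image_subset_iff.1 h).trans hWU)
  have hsub : L \ {e x} ⊆ (range e)ᶜ := by
    rintro _ ⟨hyL, hyx⟩ ⟨y, rfl⟩
    exact hyx (congrArg e ((hL y).1 hyL))
  exact fun htd => not_isTotallyDisconnected_sdiff_singleton hLcomp hLconn hLnt hxL
    fun S hS => htd S (hS.trans hsub)

end Continua

namespace OneComplex

variable {G}

/-- The point of `|G|` at parameter `t` on the edge traversed by the dart `d`, so that
`point d 0` is the vertex point of `d.fst` and `point d 1` that of `d.snd`. -/
def point (d : G.Dart) (t : unitInterval) : OneComplex G :=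
  Quotient.mk (oneComplexSetoid G) (d, t)

theorem exists_point_eq (x : OneComplex G) : ∃ d t, point d t = x :=
  let ⟨⟨d, t⟩, h⟩ := Quotient.exists_rep x
  ⟨d, t, h⟩

theorem continuous_point (d : G.Dart) : Continuous (point d) :=
  continuous_quotient_mk'.comp (Continuous.prodMk_right d)

theorem point_symm (d : G.Dart) (t : unitInterval) :
    point d.symm (unitInterval.symm t) = point d t :=
  Quotient.sound (Relation.EqvGen.symm _ _ (Relation.EqvGen.rel _ _ (Or.inl ⟨rfl, rfl⟩)))

theorem point_zero_congr {d d' : G.Dart} (h : d.fst = d'.fst) : point d 0 = point d' 0 :=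
  Quotient.sound (Relation.EqvGen.rel _ _ (Or.inr ⟨rfl, rfl, h⟩))

open Classical in
/-- The barycentric coordinate of a point of `|G|` at the vertex `u`: it is `1` at the vertex point
of `u`, `0` at the other vertex points, and affine along every edge. -/
noncomputable def coord (u : V) : OneComplex G → ℝ :=
  Quotient.lift
    (fun p => (if p.1.fst = u then 1 - (p.2 : ℝ) else 0) + if p.1.snd = u then (p.2 : ℝ) else 0)
    fun p q hpq => by
      induction (hpq : Relation.EqvGen (oneComplexRel G) p q) with
      | rel p q h =>
        obtain ⟨d, t⟩ := p
        obtain ⟨d', t'⟩ := q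
        obtain ⟨rfl, rfl⟩ | ⟨rfl, rfl, h⟩ := h
        · simp [add_comm]
        · simp [show d.fst = d'.fst from h]
      | refl => rfl
      | symm _ _ _ ih => exact ih.symm
      | trans _ _ _ _ _ ih₁ ih₂ => exact ih₁.trans ih₂

open Classical in
theorem coord_point (u : V) (d : G.Dart) (t : unitInterval) :
    coord u (point d t) =
      (if d.fst = u then 1 - (t : ℝ) else 0) + if d.snd = u then (t : ℝ) else 0 :=
  rfl

theorem coord_fst_point (d : G.Dart) (t : unitInterval) : coord d.fst (point d t) = 1 - t := by
  rw [coord_point, if_pos rfl, if_neg d.snd_ne_fst, add_zero]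

theorem coord_snd_point (d : G.Dart) (t : unitInterval) : coord d.snd (point d t) = t := by
  rw [coord_point, if_pos rfl, if_neg d.fst_ne_snd, zero_add]

theorem coord_point_of_ne {u : V} {d : G.Dart} (h₁ : d.fst ≠ u) (h₂ : d.snd ≠ u)
    (t : unitInterval) : coord u (point d t) = 0 := by
  rw [coord_point, if_neg h₁, if_neg h₂, add_zero]

theorem continuous_coord (u : V) : Continuous (coord (G := G) u) := by
  refine Continuous.quotient_lift (continuous_prod_of_discrete_left.2 fun d => ?_) _
  dsimp only
  split_ifs <;> fun_prop

theorem eq_point_zero_of_coord_eq_zero {d : G.Dart} {x : OneComplex G}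
    (h : ∀ u ≠ d.fst, coord u x = 0) : x = point d 0 := by
  obtain ⟨d', t, rfl⟩ := exists_point_eq x
  by_cases hfst : d'.fst = d.fst
  · have ht : t = 0 := by
      have := h d'.snd (hfst ▸ d'.snd_ne_fst)
      rwa [coord_snd_point, Icc.coe_eq_zero] at this
    rw [ht, point_zero_congr hfst]
  · have ht : unitInterval.symm t = 0 := by
      have := h d'.fst hfst
      rwa [coord_fst_point, ← unitInterval.coe_symm_eq, Icc.coe_eq_zero] at this
    have hsnd : d'.snd = d.fst := by
      by_contra hne
      have := h d'.snd hne
      rw [coord_snd_point, Icc.coe_eq_zero] at this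
      simp [this] at ht
    rw [← point_symm, ht, point_zero_congr hsnd]

/-- The union of the closed edges of `|G|` joining `v` to its neighbours outside `F`. -/
def fan (G : SimpleGraph V) (v : V) (F : Set V) : Set (OneComplex G) :=
  ⋃ d ∈ {d : G.Dart | d.fst = v ∧ d.snd ∉ F}, range (point d)

theorem fan_anti (v : V) : Antitone (fan G v) := fun _ _ hF =>
  biUnion_mono (fun _ hd => ⟨hd.1, fun h => hd.2 (hF h)⟩) fun _ _ => Subset.rfl

theorem point_mem_fan {d : G.Dart} {F : Set V} (hd : d.snd ∉ F) (t : unitInterval) :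
    point d t ∈ fan G d.fst F :=
  mem_biUnion (show d ∈ {d' : G.Dart | d'.fst = d.fst ∧ d'.snd ∉ F} from ⟨rfl, hd⟩)
    (mem_range_self t)

theorem isPreconnected_fan (d : G.Dart) (F : Set V) : IsPreconnected (fan G d.fst F) := by
  rw [fan, ← sUnion_image]
  refine isPreconnected_sUnion (point d 0) _ ?_ ?_
  · rintro _ ⟨d', ⟨hfst, -⟩, rfl⟩
    exact ⟨0, point_zero_congr hfst⟩
  · rintro _ ⟨d', -, rfl⟩
    exact isPreconnected_range (continuous_point d')

theorem coord_eq_zero_of_mem_closure_fan {u v : V} (huv : u ≠ v) {x : OneComplex G}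
    (hx : x ∈ closure (fan G v {u})) : coord u x = 0 := by
  refine closure_minimal (iUnion₂_subset ?_)
    (isClosed_singleton.preimage (continuous_coord u)) hx
  rintro d ⟨rfl, hsnd⟩ _ ⟨t, rfl⟩
  exact coord_point_of_ne huv.symm hsnd t

theorem exists_dart_snd_notMem {v : V} (hv : (G.neighborSet v).Infinite) (F : Finset V) :
    ∃ d : G.Dart, d.fst = v ∧ d.snd ∉ F :=
  let ⟨w, hw, hwF⟩ := hv.exists_notMem_finset F
  ⟨⟨(v, w), hw⟩, rfl, hwF⟩

theorem iInter_closure_fan {d : G.Dart} (hd : (G.neighborSet d.fst).Infinite) :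
    ⋂ F : Finset V, closure (fan G d.fst (F : Set V)) = {point d 0} := by
  refine Subset.antisymm (fun x hx => eq_point_zero_of_coord_eq_zero fun u hu => ?_)
    (singleton_subset_iff.2 (mem_iInter.2 fun F => subset_closure ?_))
  · refine coord_eq_zero_of_mem_closure_fan hu ?_
    simpa using mem_iInter.1 hx {u}
  · obtain ⟨d', hfst, hsnd⟩ := exists_dart_snd_notMem hd F
    rw [← point_zero_congr hfst, ← hfst]
    exact point_mem_fan hsnd 0

theorem setOf_coord_pos_mem_nhds (d : G.Dart) :
    {x : OneComplex G | 0 < coord d.fst x} ∈ 𝓝 (point d 0) :=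
  (isOpen_lt continuous_const (continuous_coord d.fst)).mem_nhds <| by
    simp [coord_fst_point]

theorem not_fan_subset_setOf_coord_pos {v : V} (hv : (G.neighborSet v).Infinite) (F : Finset V) :
    ¬fan G v F ⊆ {x | 0 < coord v x} := by
  obtain ⟨d, rfl, hsnd⟩ := exists_dart_snd_notMem hv F
  intro h
  simpa [coord_fst_point] using h (point_mem_fan hsnd 1)

end OneComplex

open OneComplex

theorem no_hausdorff_compactification_with_totally_disconnected_remainder_general
    (v : V) (hv : (G.neighborSet v).Infinite)
    {K : Type*} [TopologicalSpace K] [CompactSpace K] [T2Space K]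
    (e : OneComplex G → K) (he : Topology.IsEmbedding e) :
    ∃ S : Set K, S ⊆ (Set.range e)ᶜ ∧ S.Nontrivial ∧ IsPreconnected S := by
  obtain ⟨d, rfl, -⟩ := exists_dart_snd_notMem hv ∅
  have hdir : Directed (· ⊇ ·) fun F : Finset V => fan G d.fst F :=
    ((fan_anti d.fst).comp_monotone fun _ _ => Finset.coe_subset.2).directed_ge
  have hrem : ¬IsTotallyDisconnected (range e)ᶜ :=
    not_isTotallyDisconnected_compl_range_of_directed he.isInducing hdir
      (fun F => isPreconnected_fan d F) (iInter_closure_fan hv) (setOf_coord_pos_mem_nhds d)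
      (not_fan_subset_setOf_coord_pos hv)
  simp only [IsTotallyDisconnected, not_forall, not_subsingleton_iff] at hrem
  obtain ⟨S, hS, hconn, hnt⟩ := hrem
  exact ⟨S, hS, hnt, hconn⟩

/-- Theorem 7.1: if `G` is a connected infinite graph with a vertex of infinite degree, then
no Hausdorff compactification of the 1-complex `|G|` has a totally disconnected remainder:
the remainder always contains a connected subset with at least two points. -/
theorem no_hausdorff_compactification_with_totally_disconnected_remainder
    [Infinite V] (hG : G.Connected) (v : V) (hv : (G.neighborSet v).Infinite)
    {K : Type*} [TopologicalSpace K] [CompactSpace K] [T2Space K]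
    (e : OneComplex G → K) (he : Topology.IsEmbedding e) (hdense : DenseRange e) :
    ∃ S : Set K, S ⊆ (Set.range e)ᶜ ∧ S.Nontrivial ∧ IsPreconnected S := by
  exact no_hausdorff_compactification_with_totally_disconnected_remainder_general G v hv e he
end

section
/- The set of inner edge points is open in the Stone-Čech compactification of the 1-complex: the image stoneCechUnit '' E̊ is an open subset of βG, where E̊ ⊆ |G| denotes the set of inner edge points (the classes of pairs (d, t) with 0 < t < 1). -/
open SimpleGraph

variable {V : Type*} (G : SimpleGraph V)

/-!
A continuous map `f` into a compact Hausdorff space extends to the Stone-Čech compactification.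
If `f ⁻¹' U` lies in a compact set `K`, then the preimage of the open set `U` under the extension
consists of points of the space itself: since the space is dense, that preimage lies in the closure
of the image of `f ⁻¹' U`, hence in the compact image of `K`. So the image of `f ⁻¹' U` is open.

In the 1-complex, the interior of an edge has this form: it is where the bump function equal to
`t * (1 - t)` on that edge and to zero on all others does not vanish, and it lies in the closed
edge, which is compact.
-/

section StoneCech

variable {X Y : Type*} [TopologicalSpace X] [TopologicalSpace Y] [CompactSpace Y] [T2Space Y]
  {f : X → Y} {U : Set Y} {K : Set X}

theorem stoneCechExtend_preimage_eq_image (hf : Continuous f) (hU : IsOpen U) (hK : IsCompact K)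
    (hUK : f ⁻¹' U ⊆ K) : stoneCechExtend hf ⁻¹' U = stoneCechUnit '' (f ⁻¹' U) := by
  have hopen : IsOpen (stoneCechExtend hf ⁻¹' U) := hU.preimage (continuous_stoneCechExtend hf)
  have hclosed : IsClosed (stoneCechUnit '' K) := (hK.image continuous_stoneCechUnit).isClosed
  have hrange : stoneCechExtend hf ⁻¹' U ∩ Set.range stoneCechUnit ⊆ stoneCechUnit '' K := by
    rintro _ ⟨hx, x, rfl⟩
    rw [Set.mem_preimage, stoneCechExtend_stoneCechUnit] at hx
    exact ⟨x, hUK hx, rfl⟩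
  have himage : stoneCechExtend hf ⁻¹' U ⊆ stoneCechUnit '' K :=
    (denseRange_stoneCechUnit.open_subset_closure_inter hopen).trans
      (closure_minimal hrange hclosed)
  apply Set.Subset.antisymm
  · intro z hz
    obtain ⟨x, -, rfl⟩ := himage hz
    rw [Set.mem_preimage, stoneCechExtend_stoneCechUnit] at hz
    exact ⟨x, hz, rfl⟩
  · rintro _ ⟨x, hx, rfl⟩
    rwa [Set.mem_preimage, stoneCechExtend_stoneCechUnit]

theorem isOpen_stoneCechUnit_image_preimage (hf : Continuous f) (hU : IsOpen U) (hK : IsCompact K)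
    (hUK : f ⁻¹' U ⊆ K) : IsOpen (stoneCechUnit '' (f ⁻¹' U)) := by
  rw [← stoneCechExtend_preimage_eq_image hf hU hK hUK]
  exact hU.preimage (continuous_stoneCechExtend hf)

end StoneCech

namespace OneComplex

open unitInterval Set

variable {G}

/-- The parametrization of the closed edge underlying the dart `d`, traversed from the initial to
the terminal vertex of `d`. -/
def edgePath (d : G.Dart) (t : I) : OneComplex G :=
  Quotient.mk (oneComplexSetoid G) (d, t)

theorem continuous_edgePath (d : G.Dart) : Continuous (edgePath d) :=
  continuous_quotient_mk'.comp (Continuous.prodMk_right d)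

theorem exists_edgePath_eq (x : OneComplex G) : ∃ d t, edgePath d t = x :=
  Quotient.inductionOn x fun p => ⟨p.1, p.2, rfl⟩

theorem edgePath_symm (d : G.Dart) (t : I) : edgePath d.symm (σ t) = edgePath d t :=
  (Quotient.sound (Relation.EqvGen.rel (d, t) (d.symm, σ t) (Or.inl ⟨rfl, rfl⟩))).symm

theorem range_edgePath_symm (d : G.Dart) : range (edgePath d.symm) = range (edgePath d) := by
  rw [← symm_bijective.surjective.range_comp (edgePath d.symm)]
  exact congrArg range (funext (edgePath_symm d))

theorem range_edgePath_eq_of_edge_eq {d d' : G.Dart} (h : d.edge = d'.edge) :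
    range (edgePath d) = range (edgePath d') := by
  obtain rfl | rfl := (dart_edge_eq_iff d d').mp h
  · rfl
  · exact range_edgePath_symm d'

section Lift

variable {α : Type*} (f : G.Dart → I → α) (hsymm : ∀ d t, f d.symm (σ t) = f d t)
  (hzero : ∀ d d', d.fst = d'.fst → f d 0 = f d' 0)

/-- The map out of the 1-complex glued from one map `f d` per dart, which must be compatible with
reversing darts and agree at common initial vertices. -/
def lift : OneComplex G → α :=
  Quotient.lift (Function.uncurry f) fun _ _ h =>
    Setoid.eqvGen_le (s := Setoid.ker (Function.uncurry f)) (by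
      rintro ⟨d, t⟩ ⟨d', t'⟩ (⟨rfl, rfl⟩ | ⟨rfl, rfl, h⟩)
      exacts [(hsymm d t).symm, hzero d d' h]) h

theorem lift_edgePath (d : G.Dart) (t : I) : lift f hsymm hzero (edgePath d t) = f d t :=
  rfl

theorem continuous_lift [TopologicalSpace α] (hf : ∀ d, Continuous (f d)) :
    Continuous (lift f hsymm hzero) :=
  (continuous_prod_of_discrete_left.mpr hf).quotient_lift _

end Lift

open Classical in
/-- The bump function on the 1-complex that is `t * (1 - t)` at parameter `t` on the edge `e` and
zero elsewhere. It takes values in the compact space `I`, so that it extends to the Stone-Čech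
compactification. -/
noncomputable def edgeBump (e : Sym2 V) : OneComplex G → I :=
  lift (fun d t => if d.edge = e then t * σ t else 0)
    (fun d t => by simp only [Dart.edge_symm, symm_symm, mul_comm])
    (fun _ _ _ => by simp only [zero_mul, ite_self])

theorem edgeBump_edgePath_of_edge_eq {d : G.Dart} {e : Sym2 V} (h : d.edge = e) (t : I) :
    edgeBump e (edgePath d t) = t * σ t := by
  rw [edgeBump, lift_edgePath, if_pos h]

theorem edgeBump_edgePath_of_edge_ne {d : G.Dart} {e : Sym2 V} (h : d.edge ≠ e) (t : I) :
    edgeBump e (edgePath d t) = 0 := by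
  rw [edgeBump, lift_edgePath, if_neg h]

theorem continuous_edgeBump (e : Sym2 V) : Continuous (edgeBump (G := G) e) := by
  classical
  refine continuous_lift _ _ _ fun d => continuous_if_const _ (fun _ => ?_) fun _ => ?_
  · fun_prop
  · exact continuous_const

theorem support_edgeBump_subset_range (d : G.Dart) :
    Function.support (edgeBump d.edge) ⊆ range (edgePath d) := by
  intro x hx
  obtain ⟨d', t, rfl⟩ := exists_edgePath_eq x
  have hedge : d'.edge = d.edge := by
    by_contra h
    exact hx (edgeBump_edgePath_of_edge_ne h t)
  rw [← range_edgePath_eq_of_edge_eq hedge]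
  exact mem_range_self t

theorem edgePath_mem_support_edgeBump_iff (d : G.Dart) (t : I) :
    edgePath d t ∈ Function.support (edgeBump d.edge) ↔ t ∈ Ioo 0 1 := by
  rw [Function.mem_support, edgeBump_edgePath_of_edge_eq rfl, mul_ne_zero_iff, Ne, Ne,
    symm_eq_zero, mem_Ioo, unitInterval.pos_iff_ne_zero, unitInterval.lt_one_iff_ne_one]

theorem support_edgeBump (d : G.Dart) :
    Function.support (edgeBump d.edge) = edgePath d '' Ioo 0 1 := by
  have hpreimage : edgePath d ⁻¹' Function.support (edgeBump d.edge) = Ioo 0 1 :=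
    Set.ext (edgePath_mem_support_edgeBump_iff d)
  rw [← hpreimage, image_preimage_eq_of_subset (support_edgeBump_subset_range d)]

theorem isOpen_stoneCechUnit_image_edgePath_Ioo (d : G.Dart) :
    IsOpen (stoneCechUnit '' (edgePath d '' Ioo 0 1)) := by
  rw [← support_edgeBump]
  exact isOpen_stoneCechUnit_image_preimage (continuous_edgeBump d.edge) isOpen_compl_singleton
    (isCompact_range (continuous_edgePath d)) (support_edgeBump_subset_range d)

theorem innerEdgePoints_eq_iUnion : innerEdgePoints G = ⋃ d : G.Dart, edgePath d '' Ioo 0 1 := by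
  ext x
  simp only [innerEdgePoints, edgePath, mem_ofPred_eq, mem_iUnion, mem_image, mem_Ioo,
    unitInterval.coe_pos, unitInterval.coe_lt_one, and_assoc, eq_comm (a := x)]

end OneComplex

theorem innerEdgePoints_isOpen_in_stoneCech_general :
    IsOpen (stoneCechUnit '' innerEdgePoints G) := by
  rw [OneComplex.innerEdgePoints_eq_iUnion, Set.image_iUnion]
  exact isOpen_iUnion OneComplex.isOpen_stoneCechUnit_image_edgePath_Ioo

/-- Lemma 7.2: the set of inner edge points of the 1-complex is open in the Stone-Čech
compactification `βG` of `|G|`. -/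
theorem innerEdgePoints_isOpen_in_stoneCech [Infinite V] (hG : G.Connected) :
    IsOpen (stoneCechUnit '' innerEdgePoints G) :=
  innerEdgePoints_isOpen_in_stoneCech_general G
end
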